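/- Consider the two-period time-dependent quantum walk on ℤ whose coin sequence is U_{2s} = H₀ and U_{2s+1} = H₁ (s = 0,1,2,...), where H₀ = [[a₀,b₀],[c₀,d₀]] and H₁ = [[a₁,b₁],[c₁,d₁]] are real orthogonal 2×2 matrices all of whose entries are nonzero and det(H₁H₀) > 0. If the initial amplitudes satisfy the symmetry condition |α|² − |β|² + ((α·conj(β) + conj(α)·β)·b₀)/a₀ = 0, then X_t/t converges weakly as t → ∞ to a random variable Z whose density is exactly f_K(x; a_ξ), where |a_ξ| = min{|a₀|, |a₁|}; in particular the limit law is determined by one of the two matrices alone. -/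

import Mathlib

open MeasureTheory Complex Filter

noncomputable section

/-- The Konno density function `f_K(x; a)`; only `|a|` matters. -/
def konnoDensity (a x : ℝ) : ℝ :=
  if |x| < |a| then
    Real.sqrt (1 - |a| ^ 2) / (Real.pi * (1 - x ^ 2) * Real.sqrt (|a| ^ 2 - x ^ 2))
  else 0

/-- Time evolution of a time-dependent discrete-time quantum walk on `ℤ`:
`ψ_{t+1}(x) = P_t ψ_t(x+1) + Q_t ψ_t(x-1)`, where `P_t`/`Q_t` are the top/bottom
row parts of the coin `U t`. -/
def QWEvolves (U : ℕ → Matrix (Fin 2) (Fin 2) ℂ) (ψ : ℕ → ℤ → Fin 2 → ℂ) : Prop :=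
  ∀ t : ℕ, ∀ x : ℤ,
    ψ (t + 1) x 0 = U t 0 0 * ψ t (x + 1) 0 + U t 0 1 * ψ t (x + 1) 1 ∧
    ψ (t + 1) x 1 = U t 1 0 * ψ t (x - 1) 0 + U t 1 1 * ψ t (x - 1) 1

/-- Initial state `ψ₀(0) = ᵀ(α, β)`, `ψ₀(x) = 0` for `x ≠ 0`. -/
def QWInit (α β : ℂ) (ψ : ℕ → ℤ → Fin 2 → ℂ) : Prop :=
  ψ 0 0 0 = α ∧ ψ 0 0 1 = β ∧ ∀ x : ℤ, x ≠ 0 → (ψ 0 x 0 = 0 ∧ ψ 0 x 1 = 0)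

/-- `P(X_t = x) = ‖ψ_t(x)‖²`. -/
def qwProb (ψ : ℕ → ℤ → Fin 2 → ℂ) (t : ℕ) (x : ℤ) : ℝ :=
  Complex.normSq (ψ t x 0) + Complex.normSq (ψ t x 1)

/-- The law of `X_t / t`: `μ_t = Σ_{x ∈ ℤ} P(X_t = x) δ_{x/t}`. -/
def qwMeasure (ψ : ℕ → ℤ → Fin 2 → ℂ) (t : ℕ) : Measure ℝ :=
  Measure.sum fun x : ℤ => ENNReal.ofReal (qwProb ψ t x) • Measure.dirac ((x : ℝ) / (t : ℝ))

/-- Weak convergence of `X_t / t` to the law with density `f`. -/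
def qwWeakLimit (ψ : ℕ → ℤ → Fin 2 → ℂ) (f : ℝ → ℝ) : Prop :=
  ∀ g : BoundedContinuousFunction ℝ ℝ,
    Tendsto (fun t : ℕ => ∫ y, g y ∂ qwMeasure ψ t) atTop (nhds (∫ y, g y * f y))

/-- `R(k) = diag(e^{ik}, e^{-ik})`. -/
def Rmat (k : ℝ) : Matrix (Fin 2) (Fin 2) ℂ :=
  !![Complex.exp (Complex.I * k), 0; 0, Complex.exp (-(Complex.I * k))]

/-- The group velocity of the two-step walk, whose dispersion relation is
`cos θ = A cos φ - B`. -/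
def groupVelocity (A B φ : ℝ) : ℝ :=
  A * Real.sin φ / √(1 - (A * Real.cos φ - B) ^ 2)

lemma abs_add_abs_le_one_of_sq {m M A B : ℝ} (hm : m ^ 2 ≤ 1) (hM : M ^ 2 ≤ 1)
    (hA : A ^ 2 = m ^ 2 * M ^ 2) (hB : B ^ 2 = (1 - m ^ 2) * (1 - M ^ 2)) : |A| + |B| ≤ 1 := by
  have hAB : (2 * (|A| * |B|)) ^ 2 = 4 * (A ^ 2 * B ^ 2) := by
    rw [mul_pow, mul_pow, sq_abs, sq_abs]; ring
  have h0 : 0 ≤ m ^ 2 * (1 - M ^ 2) + M ^ 2 * (1 - m ^ 2) :=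
    add_nonneg (mul_nonneg (sq_nonneg _) (by linarith)) (mul_nonneg (sq_nonneg _) (by linarith))
  have h1 : 2 * (|A| * |B|) ≤ m ^ 2 * (1 - M ^ 2) + M ^ 2 * (1 - m ^ 2) := by
    refine abs_le_of_sq_le_sq' ?_ h0 |>.2
    rw [hAB, hB, hA]
    nlinarith [sq_nonneg (m ^ 2 - M ^ 2)]
  have h2 : (|A| + |B|) ^ 2 = A ^ 2 + B ^ 2 + 2 * (|A| * |B|) := by
    rw [add_sq, sq_abs, sq_abs]; ring
  rw [← sq_le_one_iff₀ (by positivity), h2, hA, hB]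
  nlinarith

/-- The right side of the dispersion relation `cos θ = A cos φ - B` lies in `(-1, 1)` unless `φ` is
a multiple of `π`. -/
lemma sq_dispersion_lt_one {A B φ : ℝ} (hA : A ≠ 0) (hAB : |A| + |B| ≤ 1)
    (hφ : Real.sin φ ≠ 0) : (A * Real.cos φ - B) ^ 2 < 1 := by
  have hc : |Real.cos φ| < 1 := by
    rw [← sq_lt_one_iff_abs_lt_one]
    nlinarith [Real.sin_sq_add_cos_sq φ, sq_pos_of_ne_zero hφ]
  rw [sq_lt_one_iff_abs_lt_one]
  calc |A * Real.cos φ - B| ≤ |A| * |Real.cos φ| + |B| := by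
        rw [← abs_mul]; exact abs_sub _ _
    _ < |A| * 1 + |B| := by gcongr
    _ ≤ 1 := by linarith

/-- The roots in `cos φ` of `groupVelocity A B φ = x`, one for each sign of `D`, lie in
`[-1, 1]`. -/
lemma velocity_root_mem {m M A B x D : ℝ} (hm : 0 < m) (hmM : m ≤ M) (hM : M < 1)
    (hA : A = m * M) (hB : B ^ 2 = (1 - m ^ 2) * (1 - M ^ 2)) (hx : 0 < x) (hxm : x ≤ m)
    (hD : D ^ 2 = (m ^ 2 - x ^ 2) * (M ^ 2 - x ^ 2)) :
    |(-B * x ^ 2 + D) / (A * (1 - x ^ 2))| ≤ 1 := by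
  have hM0 : 0 < M := hm.trans_le hmM
  have hA0 : 0 < A := hA ▸ mul_pos hm hM0
  have hx2 : x ^ 2 ≤ m ^ 2 := by gcongr
  have hm2 : m ^ 2 ≤ M ^ 2 := by gcongr
  have hM2 : M ^ 2 < 1 := by nlinarith
  have hw : 0 < 1 - x ^ 2 := by linarith
  have hAB : |A| + |B| ≤ 1 := abs_add_abs_le_one_of_sq (by linarith) hM2.le (by rw [hA]; ring) hB
  have hBx : |B * x ^ 2| ≤ A * (1 - x ^ 2) := by
    apply abs_le_of_sq_le_sq _ (by positivity)
    have h1 : (1 - m ^ 2) * x ^ 2 ≤ m ^ 2 * (1 - x ^ 2) := by nlinarith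
    have h2 : (1 - M ^ 2) * x ^ 2 ≤ M ^ 2 * (1 - x ^ 2) := by nlinarith
    have := mul_le_mul h1 h2 (mul_nonneg (by linarith) (by positivity)) (by positivity)
    calc (B * x ^ 2) ^ 2 = (1 - m ^ 2) * x ^ 2 * ((1 - M ^ 2) * x ^ 2) := by
          rw [mul_pow, hB]; ring
      _ ≤ _ := this
      _ = _ := by rw [hA]; ring
  have hBx' := abs_le.1 hBx
  have hAB1 : (A - B) ^ 2 ≤ 1 := by
    rw [sq_le_one_iff_abs_le_one]; exact (abs_sub _ _).trans hAB
  have hAB2 : (A + B) ^ 2 ≤ 1 := by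
    rw [sq_le_one_iff_abs_le_one]; exact (abs_add_le _ _).trans hAB
  have e1 : |D| ≤ A * (1 - x ^ 2) + B * x ^ 2 := by
    apply abs_le_of_sq_le_sq _ (by linarith)
    have h : 0 ≤ (1 - x ^ 2) * x ^ 2 * (1 - (A - B) ^ 2) :=
      mul_nonneg (by positivity) (by linarith)
    have key : (A * (1 - x ^ 2) + B * x ^ 2) ^ 2 - D ^ 2
        = (1 - x ^ 2) * x ^ 2 * (1 - (A - B) ^ 2) := by
      subst hA; linear_combination x ^ 2 * hB - hD
    linarith
  have e2 : |D| ≤ A * (1 - x ^ 2) - B * x ^ 2 := by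
    apply abs_le_of_sq_le_sq _ (by linarith)
    have h : 0 ≤ (1 - x ^ 2) * x ^ 2 * (1 - (A + B) ^ 2) :=
      mul_nonneg (by positivity) (by linarith)
    have key : (A * (1 - x ^ 2) - B * x ^ 2) ^ 2 - D ^ 2
        = (1 - x ^ 2) * x ^ 2 * (1 - (A + B) ^ 2) := by
      subst hA; linear_combination x ^ 2 * hB - hD
    linarith
  have e1' := abs_le.1 e1
  have e2' := abs_le.1 e2
  rw [abs_div, abs_of_pos (mul_pos hA0 hw), div_le_one (mul_pos hA0 hw), abs_le]
  constructor <;> linarith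

/-- The superlevel sets of the group velocity on `(0, π)` are intervals. -/
lemma le_groupVelocity_iff {m M A B x D φ : ℝ} (hm : 0 < m) (hmM : m ≤ M) (hM : M < 1)
    (hA : A = m * M) (hB : B ^ 2 = (1 - m ^ 2) * (1 - M ^ 2)) (hx : 0 < x) (hxm : x ≤ m)
    (hD0 : 0 ≤ D) (hD : D ^ 2 = (m ^ 2 - x ^ 2) * (M ^ 2 - x ^ 2)) (hφ : φ ∈ Set.Ioo 0 Real.pi) :
    x ≤ groupVelocity A B φ ↔
      φ ∈ Set.Icc (Real.arccos ((-B * x ^ 2 + D) / (A * (1 - x ^ 2))))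
        (Real.arccos ((-B * x ^ 2 + -D) / (A * (1 - x ^ 2)))) := by
  have hM0 : 0 < M := hm.trans_le hmM
  have hA0 : 0 < A := hA ▸ mul_pos hm hM0
  have hx2 : x ^ 2 ≤ m ^ 2 := by gcongr
  have hm2 : m ^ 2 ≤ M ^ 2 := by gcongr
  have hM2 : M ^ 2 < 1 := by nlinarith
  have hw : 0 < 1 - x ^ 2 := by linarith
  have hAB : |A| + |B| ≤ 1 :=
    abs_add_abs_le_one_of_sq (by linarith) hM2.le (by rw [hA]; ring) hB
  have hs : 0 < Real.sin φ := Real.sin_pos_of_mem_Ioo hφ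
  have hr : 0 < 1 - (A * Real.cos φ - B) ^ 2 :=
    sub_pos.2 (sq_dispersion_lt_one hA0.ne' hAB hs.ne')
  have hp := abs_le.1 (velocity_root_mem hm hmM hM hA hB hx hxm hD)
  have hn := abs_le.1 (velocity_root_mem hm hmM hM hA hB hx hxm
    (show (-D) ^ 2 = _ by rw [neg_sq, hD]))
  have hφ' := Real.arccos_cos hφ.1.le hφ.2.le
  rw [Set.mem_Icc]
  nth_rw 2 [← hφ']
  nth_rw 3 [← hφ']
  have hc := Real.neg_one_le_cos φ
  have hc' := Real.cos_le_one φ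
  rw [Real.strictAntiOn_arccos.le_iff_ge hp ⟨hc, hc'⟩,
    Real.strictAntiOn_arccos.le_iff_ge ⟨hc, hc'⟩ hn, le_div_iff₀ (mul_pos hA0 hw),
    div_le_iff₀ (mul_pos hA0 hw), groupVelocity, le_div_iff₀ (Real.sqrt_pos.2 hr)]
  have hsq : x * √(1 - (A * Real.cos φ - B) ^ 2) ≤ A * Real.sin φ ↔
      x ^ 2 * (1 - (A * Real.cos φ - B) ^ 2) ≤ A ^ 2 * (1 - Real.cos φ ^ 2) := by
    rw [← sq_le_sq₀ (by positivity) (by positivity), mul_pow, mul_pow, Real.sq_sqrt hr.le,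
      Real.sin_sq]
  have hquad : (A * (1 - x ^ 2) * Real.cos φ + B * x ^ 2) ^ 2 - D ^ 2 = (1 - x ^ 2) *
      (x ^ 2 * (1 - (A * Real.cos φ - B) ^ 2) - A ^ 2 * (1 - Real.cos φ ^ 2)) := by
    subst hA; linear_combination x ^ 2 * hB - hD
  have habs : (A * (1 - x ^ 2) * Real.cos φ + B * x ^ 2) ^ 2 ≤ D ^ 2 ↔
      |A * (1 - x ^ 2) * Real.cos φ + B * x ^ 2| ≤ D := by
    rw [sq_le_sq, abs_of_nonneg hD0]
  have hsign : x ^ 2 * (1 - (A * Real.cos φ - B) ^ 2) ≤ A ^ 2 * (1 - Real.cos φ ^ 2) ↔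
      (A * (1 - x ^ 2) * Real.cos φ + B * x ^ 2) ^ 2 ≤ D ^ 2 := by
    rw [← sub_nonpos, ← sub_nonpos (b := D ^ 2), hquad]
    exact ⟨fun h => mul_nonpos_of_nonneg_of_nonpos hw.le h,
      fun h => nonpos_of_mul_nonpos_right h hw⟩
  rw [hsq, hsign, habs, abs_le]
  constructor <;> rintro ⟨h1, h2⟩ <;> constructor <;> linarith

lemma arccos_sub_arccos_velocity_root {m M A B x D : ℝ} (hm : 0 < m) (hmM : m ≤ M) (hM : M < 1)
    (hA : A = m * M) (hB : B ^ 2 = (1 - m ^ 2) * (1 - M ^ 2)) (hx : 0 < x) (hxm : x ≤ m)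
    (hD0 : 0 ≤ D) (hD : D ^ 2 = (m ^ 2 - x ^ 2) * (M ^ 2 - x ^ 2)) :
    Real.arccos ((-B * x ^ 2 + -D) / (A * (1 - x ^ 2))) -
      Real.arccos ((-B * x ^ 2 + D) / (A * (1 - x ^ 2))) =
    2 * Real.arccos (x * √(1 - m ^ 2) / (m * √(1 - x ^ 2))) := by
  have hM0 : 0 < M := hm.trans_le hmM
  have hA0 : 0 < A := hA ▸ mul_pos hm hM0
  have hx2 : x ^ 2 ≤ m ^ 2 := by gcongr
  have hm2 : m ^ 2 ≤ M ^ 2 := by gcongr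
  have hM2 : M ^ 2 < 1 := by nlinarith
  have hw : 0 < 1 - x ^ 2 := by linarith
  have hp := abs_le.1 (velocity_root_mem hm hmM hM hA hB hx hxm hD)
  have hn := abs_le.1 (velocity_root_mem hm hmM hM hA hB hx hxm
    (show (-D) ^ 2 = _ by rw [neg_sq, hD]))
  have hle : (-B * x ^ 2 + -D) / (A * (1 - x ^ 2)) ≤ (-B * x ^ 2 + D) / (A * (1 - x ^ 2)) := by
    gcongr; linarith
  have hy0 : 0 ≤ x * √(1 - m ^ 2) / (m * √(1 - x ^ 2)) := by positivity
  have hy2 : (x * √(1 - m ^ 2) / (m * √(1 - x ^ 2))) ^ 2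
      = x ^ 2 * (1 - m ^ 2) / (m ^ 2 * (1 - x ^ 2)) := by
    rw [div_pow, mul_pow, mul_pow, Real.sq_sqrt (by linarith), Real.sq_sqrt hw.le]
  have hy1 : x * √(1 - m ^ 2) / (m * √(1 - x ^ 2)) ≤ 1 := by
    rw [← sq_le_one_iff₀ hy0, hy2, div_le_one (by positivity)]
    nlinarith
  have hprod : (1 - ((-B * x ^ 2 + -D) / (A * (1 - x ^ 2))) ^ 2) *
      (1 - ((-B * x ^ 2 + D) / (A * (1 - x ^ 2))) ^ 2)
      = (x ^ 2 * (M ^ 2 - m ^ 2) / (A ^ 2 * (1 - x ^ 2))) ^ 2 := by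
    have hAw : (A * (1 - x ^ 2)) ^ 2 ≠ 0 := by positivity
    have h : ((A * (1 - x ^ 2)) ^ 2 - (-B * x ^ 2 + -D) ^ 2) *
        ((A * (1 - x ^ 2)) ^ 2 - (-B * x ^ 2 + D) ^ 2)
        = (x ^ 2 * (M ^ 2 - m ^ 2) * (1 - x ^ 2)) ^ 2 := by
      have h' : ((A * (1 - x ^ 2)) ^ 2 - (-B * x ^ 2 + -D) ^ 2) *
          ((A * (1 - x ^ 2)) ^ 2 - (-B * x ^ 2 + D) ^ 2)
          = ((A * (1 - x ^ 2)) ^ 2 - B ^ 2 * x ^ 4 - D ^ 2) ^ 2 - 4 * x ^ 4 * B ^ 2 * D ^ 2 := by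
        ring
      rw [h', hB, hD, hA]
      ring
    rw [div_pow, div_pow, one_sub_div hAw, one_sub_div hAw, div_mul_div_comm, h]
    field_simp
  apply Real.injOn_cos
  · have h1 := Real.arccos_le_pi ((-B * x ^ 2 + -D) / (A * (1 - x ^ 2)))
    have h2 := Real.arccos_nonneg ((-B * x ^ 2 + D) / (A * (1 - x ^ 2)))
    have h3 := Real.arccos_le_arccos hle
    constructor <;> linarith
  · have h1 := Real.arccos_nonneg (x * √(1 - m ^ 2) / (m * √(1 - x ^ 2)))
    have h2 := Real.arccos_le_pi_div_two.2 hy0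
    constructor <;> linarith
  · rw [Real.cos_sub, Real.cos_two_mul, Real.cos_arccos hp.1 hp.2, Real.cos_arccos hn.1 hn.2,
      Real.cos_arccos (by linarith) hy1, hy2, Real.sin_arccos, Real.sin_arccos,
      ← Real.sqrt_mul (by nlinarith), hprod, Real.sqrt_sq
      (div_nonneg (mul_nonneg (sq_nonneg _) (by linarith)) (by positivity))]
    have h : (-B * x ^ 2 + -D) / (A * (1 - x ^ 2)) * ((-B * x ^ 2 + D) / (A * (1 - x ^ 2)))
        = (B ^ 2 * x ^ 4 - D ^ 2) / (A * (1 - x ^ 2)) ^ 2 := by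
      rw [div_mul_div_comm]; ring
    rw [h, hB, hD, hA]
    field_simp
    ring

lemma konnoDensity_nonneg (a x : ℝ) : 0 ≤ konnoDensity a x := by
  unfold konnoDensity
  split_ifs with h
  · rcases le_or_gt (|a| ^ 2) 1 with ha | ha
    · have : x ^ 2 ≤ |a| ^ 2 := by rw [← sq_abs x]; gcongr
      have : 0 ≤ 1 - x ^ 2 := by linarith
      positivity
    · rw [Real.sqrt_eq_zero_of_nonpos (by linarith), zero_div]
  · rfl

lemma konnoDensity_neg (a x : ℝ) : konnoDensity a (-x) = konnoDensity a x := by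
  simp [konnoDensity]

@[fun_prop]
lemma measurable_konnoDensity (a : ℝ) : Measurable (konnoDensity a) := by
  unfold konnoDensity
  refine Measurable.ite (measurableSet_lt (by fun_prop) (by fun_prop)) ?_ ?_ <;> fun_prop

/-- An antiderivative of twice the Konno density. -/
lemma hasDerivAt_arccos_konno {m x : ℝ} (hm : 0 < m) (hm1 : m < 1) (hx : |x| < m) :
    HasDerivAt (fun y => -(2 / Real.pi * Real.arccos (y * √(1 - m ^ 2) / (m * √(1 - y ^ 2)))))
      (2 * konnoDensity m x) x := by
  have hx2 : x ^ 2 < m ^ 2 := sq_lt_sq.2 (by rwa [abs_of_pos hm])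
  have hm2 : m ^ 2 < 1 := by nlinarith
  have hw : 0 < 1 - x ^ 2 := by linarith
  have hd : HasDerivAt (fun y : ℝ => √(1 - y ^ 2)) (-(x / √(1 - x ^ 2))) x := by
    have h := ((hasDerivAt_pow 2 x).const_sub 1).sqrt hw.ne'
    refine h.congr_deriv ?_
    field_simp
    simp
  have hy2 : (x * √(1 - m ^ 2) / (m * √(1 - x ^ 2))) ^ 2
      = x ^ 2 * (1 - m ^ 2) / (m ^ 2 * (1 - x ^ 2)) := by
    rw [div_pow, mul_pow, mul_pow, Real.sq_sqrt (by linarith), Real.sq_sqrt hw.le]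
  have h1 : 1 - (x * √(1 - m ^ 2) / (m * √(1 - x ^ 2))) ^ 2
      = (m ^ 2 - x ^ 2) / (m ^ 2 * (1 - x ^ 2)) := by
    rw [hy2]; field_simp; ring
  have hlt : (x * √(1 - m ^ 2) / (m * √(1 - x ^ 2))) ^ 2 < 1 := by
    rw [← sub_pos, h1]
    have : 0 < m ^ 2 - x ^ 2 := by linarith
    positivity
  have hne : x * √(1 - m ^ 2) / (m * √(1 - x ^ 2)) ≠ -1 := by
    intro h; rw [h] at hlt; norm_num at hlt
  have hne' : x * √(1 - m ^ 2) / (m * √(1 - x ^ 2)) ≠ 1 := by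
    intro h; rw [h] at hlt; norm_num at hlt
  have hr : 0 < √(1 - x ^ 2) := Real.sqrt_pos.2 hw
  have hy := ((hasDerivAt_id x).mul_const √(1 - m ^ 2)).div (hd.const_mul m)
    (mul_pos hm hr).ne'
  have := (((Real.hasDerivAt_arccos hne hne').comp x hy).const_mul (2 / Real.pi)).neg
  refine this.congr_deriv ?_
  simp only [id]
  rw [h1, Real.sqrt_div (by linarith), Real.sqrt_mul (by positivity), Real.sqrt_sq hm.le,
    konnoDensity, abs_of_pos hm, if_pos hx]
  have hr2 : 0 < √(m ^ 2 - x ^ 2) := Real.sqrt_pos.2 (by linarith)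
  have hw2 : √(1 - x ^ 2) ^ 2 = 1 - x ^ 2 := Real.sq_sqrt hw.le
  have hw3 : 1 - x ^ 2 ≠ 0 := hw.ne'
  rw [← hw2]
  field_simp
  rw [hw2]
  linear_combination (-(x ^ 2 * √(1 - m ^ 2))) * hw2

lemma lintegral_Ioi_konnoDensity {m x : ℝ} (hm : 0 < m) (hm1 : m < 1) (hx : 0 ≤ x) (hxm : x ≤ m) :
    ∫⁻ y in Set.Ioi x, ENNReal.ofReal (2 * konnoDensity m y)
      = ENNReal.ofReal (2 / Real.pi * Real.arccos (x * √(1 - m ^ 2) / (m * √(1 - x ^ 2)))) := by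
  have hm2 : m ^ 2 < 1 := by nlinarith
  set F : ℝ → ℝ := fun y =>
    -(2 / Real.pi * Real.arccos (y * √(1 - m ^ 2) / (m * √(1 - y ^ 2)))) with hF
  have hcont : ContinuousOn F (Set.Icc x m) := by
    refine (continuousOn_const.mul (Real.continuous_arccos.comp_continuousOn ?_)).neg
    refine ContinuousOn.div (by fun_prop) (by fun_prop) fun y hy => ?_
    have : y ^ 2 ≤ m ^ 2 := pow_le_pow_left₀ (hx.trans hy.1) hy.2 2
    exact (mul_pos hm (Real.sqrt_pos.2 (by linarith))).ne'
  have hderiv : ∀ y ∈ Set.Ioo x m, HasDerivAt F (2 * konnoDensity m y) y := fun y hy =>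
    hasDerivAt_arccos_konno hm hm1 (abs_lt.2 ⟨by linarith [hy.1], hy.2⟩)
  have hfint : IntegrableOn (fun y => 2 * konnoDensity m y) (Set.Ioc x m) :=
    intervalIntegral.integrableOn_deriv_of_nonneg hcont hderiv
      fun y _ => mul_nonneg zero_le_two (konnoDensity_nonneg m y)
  have hval := intervalIntegral.integral_eq_sub_of_hasDerivAt_of_le hxm hcont hderiv
    ((intervalIntegrable_iff_integrableOn_Ioc_of_le hxm).2 hfint)
  have hFm : F m = 0 := by
    have : 0 < √(1 - m ^ 2) := Real.sqrt_pos.2 (by linarith)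
    simp [hF, div_self (mul_pos hm this).ne']
  rw [← Set.Ioc_union_Ioi_eq_Ioi hxm, lintegral_union measurableSet_Ioi
    (Set.Ioc_disjoint_Ioi le_rfl), setLIntegral_congr_fun (g := fun _ => 0) measurableSet_Ioi,
    lintegral_zero, add_zero, ← ofReal_integral_eq_lintegral_ofReal hfint
    (ae_of_all _ fun y => mul_nonneg zero_le_two (konnoDensity_nonneg m y)),
    ← intervalIntegral.integral_of_le hxm, hval, hFm, hF]
  · simp
  · intro y hy
    have : m < y := hy
    simp [konnoDensity, abs_of_pos hm, abs_of_pos (hm.trans this), not_lt.2 this.le]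

/-- The group velocity at a uniformly distributed wave number in `(0, π)` has the law of the absolute
value of a random variable with the Konno density. -/
lemma map_groupVelocity_eq {m M A B : ℝ} (hm : 0 < m) (hmM : m ≤ M) (hM : M < 1)
    (hA : A = m * M) (hB : B ^ 2 = (1 - m ^ 2) * (1 - M ^ 2)) :
    ((ENNReal.ofReal (1 / Real.pi)) • (volume.restrict (Set.Ioo 0 Real.pi)).map
        (groupVelocity A B)) =
      (volume.restrict (Set.Ioi 0)).withDensity
        fun y => ENNReal.ofReal (2 * konnoDensity m y) := by
  have hm1 : m < 1 := hmM.trans_lt hM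
  have hM0 : 0 < M := hm.trans_le hmM
  have hA0 : 0 < A := hA ▸ mul_pos hm hM0
  have hpi := Real.pi_pos
  have hmeas : Measurable (groupVelocity A B) := by unfold groupVelocity; fun_prop
  have hker : ∀ x, 0 < x → x ≤ m →
      volume (groupVelocity A B ⁻¹' Set.Ici x ∩ Set.Ioo 0 Real.pi) =
      ENNReal.ofReal (2 * Real.arccos (x * √(1 - m ^ 2) / (m * √(1 - x ^ 2)))) := by
    intro x hx hxm
    have hx2 : x ^ 2 ≤ m ^ 2 := by gcongr
    have hm2 : m ^ 2 ≤ M ^ 2 := by gcongr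
    have hnn : 0 ≤ (m ^ 2 - x ^ 2) * (M ^ 2 - x ^ 2) := mul_nonneg (by linarith) (by linarith)
    have hD := Real.sq_sqrt hnn
    have hD0 := Real.sqrt_nonneg ((m ^ 2 - x ^ 2) * (M ^ 2 - x ^ 2))
    generalize √((m ^ 2 - x ^ 2) * (M ^ 2 - x ^ 2)) = D at hD hD0
    rw [← arccos_sub_arccos_velocity_root hm hmM hM hA hB hx hxm hD0 hD]
    have hiff := fun φ (hφ : φ ∈ Set.Ioo 0 Real.pi) =>
      le_groupVelocity_iff hm hmM hM hA hB hx hxm hD0 hD hφ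
    have hl := Real.arccos_nonneg ((-B * x ^ 2 + D) / (A * (1 - x ^ 2)))
    have hr := Real.arccos_le_pi ((-B * x ^ 2 + -D) / (A * (1 - x ^ 2)))
    refine le_antisymm ?_ ?_
    · rw [← Real.volume_Icc]
      exact measure_mono fun φ hφ => (hiff φ hφ.2).1 hφ.1
    · rw [← Real.volume_Ioo]
      refine measure_mono fun φ hφ => ?_
      have : φ ∈ Set.Ioo 0 Real.pi := ⟨hl.trans_lt hφ.1, hφ.2.trans_le hr⟩
      exact ⟨(hiff φ this).2 (Set.Ioo_subset_Icc_self hφ), this⟩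
  have : IsFiniteMeasure (ENNReal.ofReal (1 / Real.pi) •
      (volume.restrict (Set.Ioo 0 Real.pi)).map (groupVelocity A B)) :=
    Measure.smul_finite _ ENNReal.ofReal_ne_top
  refine Measure.ext_of_Ici _ _ fun x => ?_
  rw [Measure.smul_apply, Measure.map_apply hmeas measurableSet_Ici,
    Measure.restrict_apply (hmeas measurableSet_Ici), withDensity_apply _ measurableSet_Ici,
    Measure.restrict_restrict measurableSet_Ici, smul_eq_mul]
  rcases le_or_gt x 0 with hx0 | hx0
  · have h1 : groupVelocity A B ⁻¹' Set.Ici x ∩ Set.Ioo 0 Real.pi = Set.Ioo 0 Real.pi := by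
      refine Set.inter_eq_right.2 fun φ hφ => hx0.trans ?_
      exact div_nonneg (mul_nonneg hA0.le (Real.sin_pos_of_mem_Ioo hφ).le) (Real.sqrt_nonneg _)
    have h2 : Set.Ici x ∩ Set.Ioi (0 : ℝ) = Set.Ioi 0 :=
      Set.inter_eq_right.2 fun y hy => hx0.trans (le_of_lt hy)
    rw [h1, h2, lintegral_Ioi_konnoDensity hm hm1 le_rfl hm.le, Real.volume_Ioo,
      ← ENNReal.ofReal_mul (by positivity)]
    congr 1
    simp
  · have h2 : Set.Ici x ∩ Set.Ioi (0 : ℝ) = Set.Ici x :=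
      Set.inter_eq_left.2 fun y hy => hx0.trans_le hy
    rw [h2, setLIntegral_congr Ioi_ae_eq_Ici.symm]
    rcases le_or_gt x m with hxm | hxm
    · rw [hker x hx0 hxm, lintegral_Ioi_konnoDensity hm hm1 hx0.le hxm,
        ← ENNReal.ofReal_mul (by positivity)]
      congr 1
      ring
    · have hzero : Real.arccos (m * √(1 - m ^ 2) / (m * √(1 - m ^ 2))) = 0 := by
        have : 0 < √(1 - m ^ 2) := Real.sqrt_pos.2 (by nlinarith)
        rw [div_self (mul_pos hm this).ne', Real.arccos_one]
      have hk := hker m hm le_rfl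
      have hd := lintegral_Ioi_konnoDensity hm hm1 hm.le le_rfl
      simp only [hzero, mul_zero, ENNReal.ofReal_zero] at hk hd
      rw [measure_mono_null (Set.inter_subset_inter_left _
        (Set.preimage_mono (Set.Ici_subset_Ici.2 hxm.le))) hk, mul_zero]
      exact (le_antisymm ((lintegral_mono_set (Set.Ioi_subset_Ioi hxm.le)).trans hd.le)
        bot_le).symm

lemma groupVelocity_pi_sub (A B φ : ℝ) :
    groupVelocity A B (Real.pi - φ) = -groupVelocity (-A) B φ := by
  simp only [groupVelocity, Real.sin_pi_sub, Real.cos_pi_sub]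
  ring_nf

lemma groupVelocity_neg (A B φ : ℝ) : groupVelocity A B (-φ) = -groupVelocity A B φ := by
  simp only [groupVelocity, Real.sin_neg, Real.cos_neg]
  ring

@[fun_prop]
lemma measurable_groupVelocity (A B : ℝ) : Measurable (groupVelocity A B) := by
  unfold groupVelocity; fun_prop

/-- An even observable has the same mean under the Konno law and under the law of the group
velocity at a uniformly distributed wave number. -/
lemma integral_mul_konnoDensity {m M A B : ℝ} (hm : 0 < m) (hmM : m ≤ M) (hM : M < 1)
    (hA : |A| = m * M) (hB : B ^ 2 = (1 - m ^ 2) * (1 - M ^ 2)) {g : ℝ → ℝ} (hg : Measurable g)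
    (heven : ∀ y, g (-y) = g y) :
    ∫ y, g y * konnoDensity m y = 1 / Real.pi * ∫ φ in 0..Real.pi, g (groupVelocity A B φ) := by
  have hpos : ∀ {A : ℝ}, A = m * M →
      ∫ y, g y * konnoDensity m y = 1 / Real.pi * ∫ φ in 0..Real.pi, g (groupVelocity A B φ) := by
    intro A hA
    have h := congrArg (fun μ => ∫ y, g y ∂μ) (map_groupVelocity_eq hm hmM hM hA hB)
    rw [integral_smul_measure, integral_map (by fun_prop) hg.aestronglyMeasurable,
      integral_withDensity_eq_integral_toReal_smul (by fun_prop)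
        (ae_of_all _ fun _ => ENNReal.ofReal_lt_top),
      ENNReal.toReal_ofReal (one_div_nonneg.2 Real.pi_pos.le)] at h
    rw [intervalIntegral.integral_of_le Real.pi_pos.le, integral_Ioc_eq_integral_Ioo,
      ← smul_eq_mul, h]
    have habs : ∀ y, g y * konnoDensity m y = g |y| * konnoDensity m |y| := by
      intro y
      rcases abs_cases y with ⟨h, _⟩ | ⟨h, _⟩ <;> simp [h, heven, konnoDensity_neg]
    rw [integral_congr_ae (ae_of_all _ habs)]
    rw [integral_comp_abs (f := fun y => g y * konnoDensity m y), ← integral_const_mul]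
    refine integral_congr_ae (ae_of_all _ fun y => ?_)
    simp only [smul_eq_mul]
    rw [ENNReal.toReal_ofReal (mul_nonneg zero_le_two (konnoDensity_nonneg m y))]
    ring
  rcases abs_choice A with h | h
  · exact hpos (h ▸ hA)
  · rw [hpos (h ▸ hA)]
    congr 1
    have := intervalIntegral.integral_comp_sub_left (a := 0) (b := Real.pi)
      (fun φ => g (groupVelocity A B φ)) Real.pi
    simp only [sub_self, sub_zero, groupVelocity_pi_sub, heven] at this
    exact this

lemma integrable_konnoDensity {m : ℝ} (hm : 0 < m) (hm1 : m < 1) :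
    Integrable (konnoDensity m) ∧ ∫ y, konnoDensity m y = 1 := by
  have h := integral_mul_konnoDensity (A := m * m) (B := 1 - m ^ 2) hm le_rfl hm1
    (abs_of_pos (mul_pos hm hm)) (by ring) (g := fun _ => 1) measurable_const fun _ => rfl
  have h1 : ∫ y, konnoDensity m y = 1 := by
    simpa [Real.pi_ne_zero] using h
  exact ⟨Integrable.of_integral_ne_zero (by rw [h1]; exact one_ne_zero), h1⟩

/-- The law on `ℝ` with the Konno density. -/
def konnoLaw (m : ℝ) : Measure ℝ := volume.withDensity fun y => ENNReal.ofReal (konnoDensity m y)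

lemma isProbabilityMeasure_konnoLaw {m : ℝ} (hm : 0 < m) (hm1 : m < 1) :
    IsProbabilityMeasure (konnoLaw m) := by
  obtain ⟨hi, h1⟩ := integrable_konnoDensity hm hm1
  constructor
  rw [konnoLaw, withDensity_apply _ MeasurableSet.univ, Measure.restrict_univ,
    ← ofReal_integral_eq_lintegral_ofReal hi (ae_of_all _ (konnoDensity_nonneg m)), h1,
    ENNReal.ofReal_one]

lemma integral_konnoLaw {E : Type*} [NormedAddCommGroup E] [NormedSpace ℝ E] (m : ℝ) (g : ℝ → E) :
    ∫ y, g y ∂konnoLaw m = ∫ y, konnoDensity m y • g y := by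
  rw [konnoLaw, integral_withDensity_eq_integral_toReal_smul (by fun_prop)
    (ae_of_all _ fun _ => ENNReal.ofReal_lt_top)]
  simp_rw [ENNReal.toReal_ofReal (konnoDensity_nonneg m _)]

/-- The characteristic function of the Konno law as an average over wave numbers. -/
lemma charFun_konnoLaw {m M A B : ℝ} (hm : 0 < m) (hmM : m ≤ M) (hM : M < 1)
    (hA : |A| = m * M) (hB : B ^ 2 = (1 - m ^ 2) * (1 - M ^ 2)) (ξ : ℝ) :
    charFun (konnoLaw m) ξ =
      ((1 / Real.pi * ∫ φ in 0..Real.pi, Real.cos (ξ * groupVelocity A B φ) : ℝ) : ℂ) := by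
  obtain ⟨hi, -⟩ := integrable_konnoDensity hm (hmM.trans_lt hM)
  rw [← integral_mul_konnoDensity hm hmM hM hA hB (g := fun y => Real.cos (ξ * y)) (by fun_prop)
    fun y => by simp, charFun_apply_real, integral_konnoLaw]
  have hc : Integrable fun y => Real.cos (ξ * y) * konnoDensity m y :=
    hi.bdd_mul (c := 1) (by fun_prop) (ae_of_all _ fun y => Real.abs_cos_le_one _)
  have hs : Integrable fun y => Real.sin (ξ * y) * konnoDensity m y :=
    hi.bdd_mul (c := 1) (by fun_prop) (ae_of_all _ fun y => Real.abs_sin_le_one _)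
  have hodd : ∫ y, Real.sin (ξ * y) * konnoDensity m y = 0 := by
    have h := integral_neg_eq_self (fun y => Real.sin (ξ * y) * konnoDensity m y) volume
    simp only [mul_neg, Real.sin_neg, konnoDensity_neg, neg_mul, integral_neg] at h
    linarith
  have hpt : ∀ y : ℝ, konnoDensity m y • Complex.exp (ξ * y * Complex.I) =
      ((Real.cos (ξ * y) * konnoDensity m y : ℝ) : ℂ) +
        ((Real.sin (ξ * y) * konnoDensity m y : ℝ) : ℂ) * Complex.I := by
    intro y
    rw [Complex.exp_mul_I, Complex.real_smul]
    push_cast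
    ring
  simp_rw [hpt]
  rw [integral_add hc.ofReal (hs.ofReal.mul_const _), integral_mul_const, integral_complex_ofReal,
    integral_complex_ofReal, hodd]
  simp

/-- The Fourier transform of the state at time `t`. -/
def qwFourier (ψ : ℕ → ℤ → Fin 2 → ℂ) (t : ℕ) (j : Fin 2) (k : ℝ) : ℂ :=
  ∑' x : ℤ, Complex.exp (-(x * k * Complex.I)) * ψ t x j

/-- The pairing of the Fourier transforms at the wave numbers `k` and `l`. -/
def qwPairing (ψ : ℕ → ℤ → Fin 2 → ℂ) (t : ℕ) (k l : ℝ) : ℂ :=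
  starRingEnd ℂ (qwFourier ψ t 0 k) * qwFourier ψ t 0 l +
    starRingEnd ℂ (qwFourier ψ t 1 k) * qwFourier ψ t 1 l

lemma QWEvolves.eq_zero_of_lt {U : ℕ → Matrix (Fin 2) (Fin 2) ℂ} {ψ : ℕ → ℤ → Fin 2 → ℂ}
    {α β : ℂ} (hinit : QWInit α β ψ) (hevol : QWEvolves U ψ) (t : ℕ) :
    ∀ (x : ℤ) (j : Fin 2), x ∉ Finset.Icc (-t : ℤ) t → ψ t x j = 0 := by
  induction t with
  | zero =>
    intro x j hx
    have hx0 : x ≠ 0 := by rintro rfl; simp at hx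
    fin_cases j
    · exact (hinit.2.2 x hx0).1
    · exact (hinit.2.2 x hx0).2
  | succ t ih =>
    intro x j hx
    rw [Finset.mem_Icc] at hx
    push_cast at hx
    have hp : x + 1 ∉ Finset.Icc (-t : ℤ) t := by rw [Finset.mem_Icc]; omega
    have hn : x - 1 ∉ Finset.Icc (-t : ℤ) t := by rw [Finset.mem_Icc]; omega
    fin_cases j
    · simp [(hevol t x).1, ih _ _ hp]
    · simp [(hevol t x).2, ih _ _ hn]

lemma qwFourier_eq_sum {ψ : ℕ → ℤ → Fin 2 → ℂ} {t : ℕ} {S : Finset ℤ}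
    (hS : ∀ x j, x ∉ S → ψ t x j = 0) (j : Fin 2) (k : ℝ) :
    qwFourier ψ t j k = ∑ x ∈ S, Complex.exp (-(x * k * Complex.I)) * ψ t x j :=
  tsum_eq_sum fun x hx => by rw [hS x j hx, mul_zero]

lemma qwFourier_zero {ψ : ℕ → ℤ → Fin 2 → ℂ} {α β : ℂ} (hinit : QWInit α β ψ) (k : ℝ) :
    qwFourier ψ 0 0 k = α ∧ qwFourier ψ 0 1 k = β := by
  have hS : ∀ x j, x ∉ ({0} : Finset ℤ) → ψ 0 x j = 0 := by
    intro x j hx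
    have hx0 : x ≠ 0 := by simpa using hx
    fin_cases j
    · exact (hinit.2.2 x hx0).1
    · exact (hinit.2.2 x hx0).2
  simp [qwFourier_eq_sum hS, hinit.1, hinit.2.1]

lemma qwFourier_succ {U : ℕ → Matrix (Fin 2) (Fin 2) ℂ} {ψ : ℕ → ℤ → Fin 2 → ℂ}
    {α β : ℂ} (hinit : QWInit α β ψ) (hevol : QWEvolves U ψ) (t : ℕ) (k : ℝ) :
    qwFourier ψ (t + 1) 0 k = Complex.exp (k * Complex.I) *
        (U t 0 0 * qwFourier ψ t 0 k + U t 0 1 * qwFourier ψ t 1 k) ∧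
      qwFourier ψ (t + 1) 1 k = Complex.exp (-(k * Complex.I)) *
        (U t 1 0 * qwFourier ψ t 0 k + U t 1 1 * qwFourier ψ t 1 k) := by
  have hsum : ∀ j, Summable fun x : ℤ => Complex.exp (-(x * k * Complex.I)) * ψ t x j := fun j =>
    summable_of_ne_finset_zero (s := Finset.Icc (-t : ℤ) t) fun x hx => by
      rw [hevol.eq_zero_of_lt hinit t x j hx, mul_zero]
  have hlin : ∀ c u v : ℂ, c * (u * qwFourier ψ t 0 k + v * qwFourier ψ t 1 k) =
      ∑' x : ℤ, c * Complex.exp (-(x * k * Complex.I)) * (u * ψ t x 0 + v * ψ t x 1) := by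
    intro c u v
    rw [qwFourier, qwFourier, ← tsum_mul_left, ← tsum_mul_left,
      ← ((hsum 0).mul_left u).tsum_add ((hsum 1).mul_left v), ← tsum_mul_left]
    exact tsum_congr fun x => by ring
  rw [hlin, hlin]
  constructor
  · rw [qwFourier, ← (Equiv.subRight (1 : ℤ)).tsum_eq]
    refine tsum_congr fun x => ?_
    rw [Equiv.subRight_apply, (hevol t (x - 1)).1, sub_add_cancel, ← Complex.exp_add]
    congr 2
    push_cast
    ring
  · rw [qwFourier, ← (Equiv.addRight (1 : ℤ)).tsum_eq]
    refine tsum_congr fun x => ?_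
    rw [Equiv.coe_addRight, (hevol t (x + 1)).2, add_sub_cancel_right, ← Complex.exp_add]
    congr 2
    push_cast
    ring

lemma continuous_qwFourier {U : ℕ → Matrix (Fin 2) (Fin 2) ℂ} {ψ : ℕ → ℤ → Fin 2 → ℂ}
    {α β : ℂ} (hinit : QWInit α β ψ) (hevol : QWEvolves U ψ) (t : ℕ) (j : Fin 2) :
    Continuous (qwFourier ψ t j) := by
  rw [funext (qwFourier_eq_sum (hevol.eq_zero_of_lt hinit t) j)]
  fun_prop

lemma integral_exp_int_mul (n : ℤ) :
    ∫ k in -Real.pi..Real.pi, Complex.exp (n * k * Complex.I) =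
      if n = 0 then 2 * (Real.pi : ℂ) else 0 := by
  split_ifs with hn
  · simp only [hn, Int.cast_zero, zero_mul, Complex.exp_zero, intervalIntegral.integral_const,
      Complex.real_smul]
    push_cast
    ring
  · have hc : (n * Complex.I : ℂ) ≠ 0 := by simp [hn]
    have h := integral_exp_mul_complex (a := -Real.pi) (b := Real.pi) hc
    have hfun : (fun k : ℝ => Complex.exp (n * k * Complex.I)) =
        fun k : ℝ => Complex.exp (n * Complex.I * k) := by
      funext k; ring_nf
    rw [hfun, h, div_eq_zero_iff, sub_eq_zero, Complex.exp_eq_exp_iff_exists_int]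
    refine Or.inl ⟨n, ?_⟩
    push_cast
    ring

/-- Parseval's identity, with a shift of the wave number. -/
lemma integral_conj_sum_mul_sum_sub (S : Finset ℤ) (f : ℤ → ℂ) (h : ℝ) :
    ∫ k in -Real.pi..Real.pi,
      starRingEnd ℂ (∑ x ∈ S, Complex.exp (-(x * k * Complex.I)) * f x) *
        ∑ x ∈ S, Complex.exp (-(x * (k - h : ℝ) * Complex.I)) * f x =
      2 * Real.pi * ∑ x ∈ S, Complex.normSq (f x) * Complex.exp (x * h * Complex.I) := by
  have hpt : ∀ k : ℝ, starRingEnd ℂ (∑ x ∈ S, Complex.exp (-(x * k * Complex.I)) * f x) *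
      ∑ x ∈ S, Complex.exp (-(x * (k - h : ℝ) * Complex.I)) * f x =
      ∑ x ∈ S, ∑ y ∈ S, starRingEnd ℂ (f x) * f y * Complex.exp (y * h * Complex.I) *
        Complex.exp ((x - y : ℤ) * k * Complex.I) := by
    intro k
    rw [map_sum, Finset.sum_mul_sum]
    refine Finset.sum_congr rfl fun x _ => Finset.sum_congr rfl fun y _ => ?_
    have he : Complex.exp (x * k * Complex.I) * Complex.exp (-(y * (k - h : ℝ) * Complex.I)) =
        Complex.exp (y * h * Complex.I) * Complex.exp ((x - y : ℤ) * k * Complex.I) := by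
      rw [← Complex.exp_add, ← Complex.exp_add]
      congr 1
      push_cast
      ring
    have hconj : starRingEnd ℂ (Complex.exp (-(x * k * Complex.I))) =
        Complex.exp (x * k * Complex.I) := by
      rw [← Complex.exp_conj]
      simp
    rw [map_mul, hconj]
    linear_combination starRingEnd ℂ (f x) * f y * he
  simp_rw [hpt]
  rw [intervalIntegral.integral_finsetSum fun x _ =>
    (by fun_prop : Continuous _).intervalIntegrable _ _, Finset.mul_sum]
  refine Finset.sum_congr rfl fun x hx => ?_
  rw [intervalIntegral.integral_finsetSum fun y _ =>
    (by fun_prop : Continuous _).intervalIntegrable _ _]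
  simp_rw [intervalIntegral.integral_const_mul, integral_exp_int_mul, sub_eq_zero]
  simp only [mul_ite, mul_zero, Finset.sum_ite_eq, hx, if_true]
  rw [Complex.normSq_eq_conj_mul_self]
  ring

lemma integral_qwPairing {U : ℕ → Matrix (Fin 2) (Fin 2) ℂ} {ψ : ℕ → ℤ → Fin 2 → ℂ}
    {α β : ℂ} (hinit : QWInit α β ψ) (hevol : QWEvolves U ψ) (t : ℕ) (h : ℝ) :
    ∫ k in -Real.pi..Real.pi, qwPairing ψ t k (k - h) =
      2 * Real.pi * ∑ x ∈ Finset.Icc (-t : ℤ) t,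
        (qwProb ψ t x : ℂ) * Complex.exp (x * h * Complex.I) := by
  have hc := continuous_qwFourier hinit hevol t
  unfold qwPairing
  rw [intervalIntegral.integral_add
    (Continuous.intervalIntegrable (by have := hc 0; fun_prop) _ _)
    (Continuous.intervalIntegrable (by have := hc 1; fun_prop) _ _)]
  simp_rw [qwFourier_eq_sum (hevol.eq_zero_of_lt hinit t)]
  rw [integral_conj_sum_mul_sum_sub _ (fun x => ψ t x 0),
    integral_conj_sum_mul_sum_sub _ (fun x => ψ t x 1), ← mul_add, ← Finset.sum_add_distrib]
  simp_rw [qwProb, Complex.ofReal_add, add_mul]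

lemma qwProb_nonneg (ψ : ℕ → ℤ → Fin 2 → ℂ) (t : ℕ) (x : ℤ) : 0 ≤ qwProb ψ t x :=
  add_nonneg (Complex.normSq_nonneg _) (Complex.normSq_nonneg _)

lemma charFun_qwMeasure {U : ℕ → Matrix (Fin 2) (Fin 2) ℂ} {ψ : ℕ → ℤ → Fin 2 → ℂ}
    {α β : ℂ} (hinit : QWInit α β ψ) (hevol : QWEvolves U ψ) (t : ℕ) (ξ : ℝ) :
    charFun (qwMeasure ψ t) ξ =
      (2 * Real.pi : ℂ)⁻¹ * ∫ k in -Real.pi..Real.pi, qwPairing ψ t k (k - ξ / t) := by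
  have hpi : (2 * Real.pi : ℂ) ≠ 0 := by simp [Real.pi_ne_zero]
  rw [integral_qwPairing hinit hevol, inv_mul_cancel_left₀ hpi, charFun_apply_real, qwMeasure,
    integral_sum_dirac fun _ => ENNReal.ofReal_ne_top,
    tsum_eq_sum (s := Finset.Icc (-t : ℤ) t) fun x hx => by
      simp [qwProb, hevol.eq_zero_of_lt hinit t x _ hx]]
  refine Finset.sum_congr rfl fun x _ => ?_
  rw [ENNReal.toReal_ofReal (qwProb_nonneg ψ t x), Complex.real_smul]
  congr 2
  push_cast
  ring

lemma isProbabilityMeasure_qwMeasure {U : ℕ → Matrix (Fin 2) (Fin 2) ℂ}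
    {ψ : ℕ → ℤ → Fin 2 → ℂ} {α β : ℂ} (hinit : QWInit α β ψ) (hevol : QWEvolves U ψ) (t : ℕ)
    (hnorm : ∀ k, qwPairing ψ t k k = 1) : IsProbabilityMeasure (qwMeasure ψ t) := by
  have h := charFun_qwMeasure hinit hevol t 0
  rw [charFun_zero] at h
  simp only [zero_div, sub_zero, hnorm, intervalIntegral.integral_const, sub_neg_eq_add,
    Complex.real_smul, mul_one, ← two_mul] at h
  have h1 : (qwMeasure ψ t).real Set.univ = (2 * Real.pi)⁻¹ * (2 * Real.pi) := by exact_mod_cast h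
  rw [inv_mul_cancel₀ (mul_ne_zero two_ne_zero Real.pi_ne_zero)] at h1
  constructor
  rwa [measureReal_def, ENNReal.toReal_eq_one_iff] at h1

lemma tendsto_of_tendsto_even_odd {X : Type*} {f : ℕ → X} {l : Filter X}
    (he : Tendsto (fun s => f (2 * s)) atTop l) (ho : Tendsto (fun s => f (2 * s + 1)) atTop l) :
    Tendsto f atTop l := by
  intro V hV
  obtain ⟨N, hN⟩ := mem_atTop_sets.1 (he hV)
  obtain ⟨N', hN'⟩ := mem_atTop_sets.1 (ho hV)
  refine mem_atTop_sets.2 ⟨2 * (N + N') + 1, fun t ht => ?_⟩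
  obtain ⟨s, rfl | rfl⟩ := Nat.even_or_odd' t
  · exact hN s (by omega)
  · exact hN' s (by omega)

/-- The powers of an element `cos θ + sin θ N` of `SU(2)` applied to a vector `(α, β)`; here
`(n₀, n₁) = N (α, β)`. -/
lemma su2_iterate {p q α β : ℂ} {θ : ℝ} (hp : p.re = Real.cos θ)
    (hpq : Complex.normSq p + Complex.normSq q = 1) (hs : Real.sin θ ≠ 0) {u w : ℕ → ℂ}
    (hu0 : u 0 = α) (hw0 : w 0 = β) (hu : ∀ s, u (s + 1) = p * u s + q * w s)
    (hw : ∀ s, w (s + 1) = -starRingEnd ℂ q * u s + starRingEnd ℂ p * w s) (s : ℕ) :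
    u s = Real.cos (s * θ) * α +
        Real.sin (s * θ) * (((p - Real.cos θ) * α + q * β) / Real.sin θ) ∧
      w s = Real.cos (s * θ) * β + Real.sin (s * θ) *
        ((-starRingEnd ℂ q * α + (starRingEnd ℂ p - Real.cos θ) * β) / Real.sin θ) := by
  have hs' : (Real.sin θ : ℂ) ≠ 0 := by exact_mod_cast hs
  have hsc : (Real.sin θ : ℂ) ^ 2 + (Real.cos θ : ℂ) ^ 2 = 1 := by
    exact_mod_cast Real.sin_sq_add_cos_sq θ
  have hre : p + starRingEnd ℂ p = 2 * Real.cos θ := by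
    rw [Complex.add_conj, hp]; push_cast; ring
  have hN : starRingEnd ℂ p * p + starRingEnd ℂ q * q = 1 := by
    rw [← Complex.normSq_eq_conj_mul_self, ← Complex.normSq_eq_conj_mul_self]
    exact_mod_cast hpq
  set c : ℂ := (Real.cos θ : ℂ)
  set r : ℂ := (Real.sin θ : ℂ)
  generalize starRingEnd ℂ p = p' at *
  generalize starRingEnd ℂ q = q' at *
  have hp' : p' = 2 * c - p := by linear_combination hre
  subst hp'
  induction s with
  | zero => simp [hu0, hw0]
  | succ s ih =>
    have hcos : (Real.cos ((s + 1 : ℕ) * θ) : ℂ) =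
        Real.cos (s * θ) * c - Real.sin (s * θ) * r := by
      push_cast
      rw [add_mul, one_mul, Complex.cos_add]
      simp [c, r]
    have hsin : (Real.sin ((s + 1 : ℕ) * θ) : ℂ) =
        Real.sin (s * θ) * c + Real.cos (s * θ) * r := by
      push_cast
      rw [add_mul, one_mul, Complex.sin_add]
      simp [c, r]
    rw [hu, hw, ih.1, ih.2, hcos, hsin]
    generalize (Real.cos (s * θ) : ℂ) = C
    generalize (Real.sin (s * θ) : ℂ) = T
    constructor
    · field_simp
      linear_combination (-T * α) * hN + (T * α) * hsc
    · field_simp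
      linear_combination (-T * β) * hN + (T * β) * hsc

/-- Asymptotics of the overlap of two nearby rotating vectors. -/
lemma tendsto_rotating_overlap {α β : ℂ} {θ : ℝ → ℝ} {n₀ n₁ : ℝ → ℂ} {φ v κ ξ : ℝ} {δ : ℕ → ℝ}
    (hθ : HasDerivAt θ v φ) (hn₀ : ContinuousAt n₀ φ) (hn₁ : ContinuousAt n₁ φ)
    (hu : Complex.normSq α + Complex.normSq β = 1)
    (hn : Complex.normSq (n₀ φ) + Complex.normSq (n₁ φ) = 1)
    (hun : starRingEnd ℂ α * n₀ φ + starRingEnd ℂ β * n₁ φ = κ * Complex.I)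
    (hδ : Tendsto (fun s : ℕ => s * δ s) atTop (nhds (-ξ))) :
    Tendsto (fun s : ℕ =>
      starRingEnd ℂ (Real.cos (s * θ φ) * α + Real.sin (s * θ φ) * n₀ φ) *
          (Real.cos (s * θ (φ + δ s)) * α + Real.sin (s * θ (φ + δ s)) * n₀ (φ + δ s)) +
        starRingEnd ℂ (Real.cos (s * θ φ) * β + Real.sin (s * θ φ) * n₁ φ) *
          (Real.cos (s * θ (φ + δ s)) * β + Real.sin (s * θ (φ + δ s)) * n₁ (φ + δ s)))
      atTop (nhds (Real.cos (ξ * v) - κ * Complex.I * Real.sin (ξ * v))) := by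
  have hδ0 : Tendsto δ atTop (nhds 0) := by
    have h := hδ.mul (tendsto_inv_atTop_nhds_zero_nat (𝕜 := ℝ))
    rw [mul_zero] at h
    refine h.congr' ?_
    filter_upwards [eventually_gt_atTop 0] with s hs
    have : (s : ℝ) ≠ 0 := by positivity
    field_simp
  have hφ : Tendsto (fun s => φ + δ s) atTop (nhds φ) := by simpa using hδ0.const_add φ
  have hΔ : Tendsto (fun s : ℕ => s * θ (φ + δ s) - s * θ φ) atTop (nhds (-(ξ * v))) := by
    have hO := (hasDerivAt_iff_isLittleO_nhds_zero.1 hθ).comp_tendsto hδ0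
    have hsO : (fun s : ℕ => (s : ℝ) * (θ (φ + δ s) - θ φ - δ s • v)) =o[atTop]
        fun s : ℕ => (s : ℝ) * δ s := (Asymptotics.isBigO_refl _ _).mul_isLittleO hO
    have h0 := (hsO.trans_isBigO (hδ.isBigO_one ℝ))
    rw [Asymptotics.isLittleO_one_iff] at h0
    have h := h0.add (hδ.mul_const v)
    refine (h.congr fun s => ?_).trans (le_of_eq ?_)
    · simp only [smul_eq_mul]; ring
    · congr 1; ring
  have hX := ((hn₀.tendsto.comp hφ).const_mul (starRingEnd ℂ α)).add
    ((hn₁.tendsto.comp hφ).const_mul (starRingEnd ℂ β))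
  have hZ := ((hn₀.tendsto.comp hφ).const_mul (starRingEnd ℂ (n₀ φ))).add
    ((hn₁.tendsto.comp hφ).const_mul (starRingEnd ℂ (n₁ φ)))
  have huC : starRingEnd ℂ α * α + starRingEnd ℂ β * β = 1 := by
    rw [← Complex.normSq_eq_conj_mul_self, ← Complex.normSq_eq_conj_mul_self]
    exact_mod_cast hu
  have hnC : starRingEnd ℂ (n₀ φ) * n₀ φ + starRingEnd ℂ (n₁ φ) * n₁ φ = 1 := by
    rw [← Complex.normSq_eq_conj_mul_self, ← Complex.normSq_eq_conj_mul_self]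
    exact_mod_cast hn
  have hnu : starRingEnd ℂ (n₀ φ) * α + starRingEnd ℂ (n₁ φ) * β = -(κ * Complex.I) := by
    have h := congrArg (starRingEnd ℂ) hun
    simp only [map_add, map_mul, Complex.conj_conj, Complex.conj_ofReal, Complex.conj_I] at h
    linear_combination h
  rw [hun] at hX
  rw [hnC] at hZ
  have hbdd : ∀ (a b : ℕ → ℝ) (z : ℕ → ℂ) (z₀ : ℂ), (∀ s, |a s| ≤ 1) → (∀ s, |b s| ≤ 1) →
      Tendsto z atTop (nhds z₀) →
      Tendsto (fun s => (a s : ℂ) * (b s : ℂ) * (z s - z₀)) atTop (nhds 0) := by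
    intro a b z z₀ ha hb hz
    have hz' : Tendsto (fun s => ‖z s - z₀‖) atTop (nhds 0) :=
      tendsto_iff_norm_sub_tendsto_zero.1 hz
    refine squeeze_zero_norm (fun s => ?_) hz'
    rw [norm_mul, norm_mul, Complex.norm_real, Complex.norm_real]
    calc |a s| * |b s| * ‖z s - z₀‖ ≤ 1 * 1 * ‖z s - z₀‖ := by gcongr; exacts [ha s, hb s]
      _ = _ := by ring
  have h1 := hbdd (fun s => Real.cos (s * θ φ)) (fun s => Real.sin (s * θ (φ + δ s))) _ _
    (fun _ => Real.abs_cos_le_one _) (fun _ => Real.abs_sin_le_one _) hX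
  have h2 := hbdd (fun s => Real.sin (s * θ φ)) (fun s => Real.sin (s * θ (φ + δ s))) _ _
    (fun _ => Real.abs_sin_le_one _) (fun _ => Real.abs_sin_le_one _) hZ
  have hc : Tendsto (fun s : ℕ => (Real.cos (s * θ (φ + δ s) - s * θ φ) : ℂ)) atTop
      (nhds (Real.cos (-(ξ * v)) : ℂ)) :=
    ((Complex.continuous_ofReal.comp Real.continuous_cos).tendsto _).comp hΔ
  have hs : Tendsto (fun s : ℕ => (Real.sin (s * θ (φ + δ s) - s * θ φ) : ℂ)) atTop
      (nhds (Real.sin (-(ξ * v)) : ℂ)) :=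
    ((Complex.continuous_ofReal.comp Real.continuous_sin).tendsto _).comp hΔ
  have h := ((hc.add (hs.const_mul (κ * Complex.I))).add h1).add h2
  refine (h.congr fun s => ?_).trans (le_of_eq ?_)
  · rw [Real.cos_sub, Real.sin_sub]
    simp only [map_add, map_mul, Complex.conj_ofReal, Function.comp_apply, Complex.ofReal_add,
      Complex.ofReal_sub, Complex.ofReal_mul]
    generalize (Real.cos (s * θ φ) : ℂ) = C
    generalize (Real.sin (s * θ φ) : ℂ) = T
    generalize (Real.cos (s * θ (φ + δ s)) : ℂ) = C'
    generalize (Real.sin (s * θ (φ + δ s)) : ℂ) = T'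
    linear_combination (-(C * C')) * huC - T * C' * hnu
  · rw [Real.cos_neg, Real.sin_neg]
    push_cast
    congr 1
    ring

lemma hasDerivAt_arccos_dispersion {A B φ : ℝ} (hφ : (A * Real.cos φ - B) ^ 2 < 1) :
    HasDerivAt (fun x => Real.arccos (A * Real.cos x - B)) (groupVelocity A B φ) φ := by
  have hlt := abs_lt.1 ((sq_lt_one_iff_abs_lt_one _).1 hφ)
  have h := (Real.hasDerivAt_arccos (ne_of_gt hlt.1) (ne_of_lt hlt.2)).comp φ
    (((Real.hasDerivAt_cos φ).const_mul A).sub_const B)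
  refine h.congr_deriv ?_
  rw [groupVelocity]
  ring

/-- The drift of the rotating amplitude caused by the initial state. -/
def initialDrift (A B E F : ℝ) (α β : ℂ) (φ : ℝ) : ℝ :=
  2 * (starRingEnd ℂ α * β).im * (E * Real.cos φ + F) / √(1 - (A * Real.cos φ - B) ^ 2)

lemma initialDrift_neg (A B E F : ℝ) (α β : ℂ) (φ : ℝ) :
    initialDrift A B E F α β (-φ) = initialDrift A B E F α β φ := by
  simp [initialDrift]

/-- Overlap of the iterates of a family of `SU(2)` matrices at two nearby values of the
parameter. -/
lemma tendsto_su2_overlap {A B E F φ ξ : ℝ} {α β : ℂ} (hsum : A ^ 2 + B ^ 2 + E ^ 2 + F ^ 2 = 1)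
    (hprod : A * B = E * F) (hαβ : Complex.normSq α + Complex.normSq β = 1)
    (hsym : A * (Complex.normSq α - Complex.normSq β) + 2 * E * (starRingEnd ℂ α * β).re = 0)
    (hφ : (A * Real.cos φ - B) ^ 2 < 1) {u w : ℕ → ℝ → ℂ}
    (hu0 : ∀ x, u 0 x = α) (hw0 : ∀ x, w 0 x = β)
    (hu : ∀ s x, u (s + 1) x =
      (Complex.exp (x * Complex.I) * A - B) * u s x + (Complex.exp (x * Complex.I) * E + F) * w s x)
    (hw : ∀ s x, w (s + 1) x =
      -starRingEnd ℂ (Complex.exp (x * Complex.I) * E + F) * u s x +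
        starRingEnd ℂ (Complex.exp (x * Complex.I) * A - B) * w s x)
    {δ : ℕ → ℝ} (hδ : Tendsto (fun s : ℕ => s * δ s) atTop (nhds (-ξ))) :
    Tendsto (fun s => starRingEnd ℂ (u s φ) * u s (φ + δ s) + starRingEnd ℂ (w s φ) * w s (φ + δ s))
      atTop (nhds (Real.cos (ξ * groupVelocity A B φ) -
        initialDrift A B E F α β φ * Complex.I * Real.sin (ξ * groupVelocity A B φ))) := by
  set p : ℝ → ℂ := fun x => Complex.exp (x * Complex.I) * A - B with hp
  set q : ℝ → ℂ := fun x => Complex.exp (x * Complex.I) * E + F with hq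
  set θ : ℝ → ℝ := fun x => Real.arccos (A * Real.cos x - B) with hθ
  have hpre : ∀ x, (p x).re = A * Real.cos x - B := fun x => by
    simp [hp, Complex.exp_ofReal_mul_I_re, mul_comm A]
  have hpim : ∀ x, (p x).im = A * Real.sin x := fun x => by
    simp [hp, Complex.exp_ofReal_mul_I_im, mul_comm A]
  have hqre : ∀ x, (q x).re = E * Real.cos x + F := fun x => by
    simp [hq, Complex.exp_ofReal_mul_I_re, mul_comm E]
  have hqim : ∀ x, (q x).im = E * Real.sin x := fun x => by
    simp [hq, Complex.exp_ofReal_mul_I_im, mul_comm E]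
  have hpq : ∀ x, Complex.normSq (p x) + Complex.normSq (q x) = 1 := fun x => by
    rw [Complex.normSq_apply, Complex.normSq_apply, hpre, hpim, hqre, hqim]
    linear_combination hsum - 2 * Real.cos x * hprod +
      (A ^ 2 + E ^ 2) * Real.sin_sq_add_cos_sq x
  have hcos : ∀ x, (A * Real.cos x - B) ^ 2 < 1 → Real.cos (θ x) = A * Real.cos x - B := by
    intro x hx
    have hlt := abs_lt.1 ((sq_lt_one_iff_abs_lt_one _).1 hx)
    exact Real.cos_arccos hlt.1.le hlt.2.le
  have hsin : ∀ x, Real.sin (θ x) = √(1 - (A * Real.cos x - B) ^ 2) := fun x => Real.sin_arccos _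
  have hsin0 : ∀ x, (A * Real.cos x - B) ^ 2 < 1 → Real.sin (θ x) ≠ 0 := fun x hx => by
    rw [hsin]; exact (Real.sqrt_pos.2 (by linarith)).ne'
  set n₀ : ℝ → ℂ := fun x => ((p x - Real.cos (θ x)) * α + q x * β) / Real.sin (θ x) with hn₀
  set n₁ : ℝ → ℂ := fun x => (-starRingEnd ℂ (q x) * α +
    (starRingEnd ℂ (p x) - Real.cos (θ x)) * β) / Real.sin (θ x) with hn₁
  have hθc : Continuous θ := by fun_prop
  have hpc : Continuous p := by fun_prop
  have hqc : Continuous q := by fun_prop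
  have hsφ : (Real.sin (θ φ) : ℂ) ≠ 0 := by exact_mod_cast hsin0 φ hφ
  have hc₀ : ContinuousAt n₀ φ := by
    refine ContinuousAt.div (Continuous.continuousAt ?_) (Continuous.continuousAt ?_) hsφ <;>
      fun_prop
  have hc₁ : ContinuousAt n₁ φ := by
    refine ContinuousAt.div (Continuous.continuousAt ?_) (Continuous.continuousAt ?_) hsφ <;>
      fun_prop
  have hsq : Real.sin (θ φ) ^ 2 = 1 - (A * Real.cos φ - B) ^ 2 := by
    rw [hsin, Real.sq_sqrt (by linarith)]
  have hnorm : Complex.normSq (n₀ φ) + Complex.normSq (n₁ φ) = 1 := by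
    have hs2 : Real.sin (θ φ) * Real.sin (θ φ) ≠ 0 := mul_self_ne_zero.2 (hsin0 φ hφ)
    have h1 := hpq φ
    simp only [hn₀, hn₁, Complex.normSq_div, Complex.normSq_ofReal]
    rw [← add_div, div_eq_one_iff_eq hs2, ← sq, hsq, hcos φ hφ, ← hpre]
    simp only [Complex.normSq_apply, Complex.add_re, Complex.add_im, Complex.mul_re,
      Complex.mul_im, Complex.sub_re, Complex.sub_im, Complex.neg_re, Complex.neg_im,
      Complex.conj_re, Complex.conj_im, Complex.ofReal_re, Complex.ofReal_im] at h1 hαβ ⊢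
    linear_combination (1 - (p φ).re ^ 2) * hαβ +
      (α.re * α.re + α.im * α.im + (β.re * β.re + β.im * β.im)) * h1
  have hun : starRingEnd ℂ α * n₀ φ + starRingEnd ℂ β * n₁ φ =
      initialDrift A B E F α β φ * Complex.I := by
    have hdrift : (initialDrift A B E F α β φ : ℂ) =
        ((2 * (starRingEnd ℂ α * β).im * (E * Real.cos φ + F) : ℝ) : ℂ) / Real.sin (θ φ) := by
      rw [initialDrift, hsin, Complex.ofReal_div]
    rw [hdrift]
    simp only [hn₀, hn₁]
    rw [mul_div_assoc', mul_div_assoc', ← add_div, div_mul_eq_mul_div]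
    congr 1
    rw [hcos φ hφ, ← hpre, ← hqre]
    have h1 := hpim φ
    have h2 := hqim φ
    apply Complex.ext <;>
    simp only [Complex.normSq_apply, Complex.add_re, Complex.add_im, Complex.mul_re,
      Complex.mul_im, Complex.sub_re, Complex.sub_im, Complex.neg_re, Complex.neg_im,
      Complex.conj_re, Complex.conj_im, Complex.ofReal_re, Complex.ofReal_im, Complex.I_re,
      Complex.I_im] at h1 h2 hsym ⊢
    · ring
    · rw [h1, h2]
      linear_combination Real.sin φ * hsym
  have hmain := tendsto_rotating_overlap (θ := θ) (hasDerivAt_arccos_dispersion hφ) hc₀ hc₁ hαβ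
    hnorm hun hδ
  refine hmain.congr' ?_
  have hδ0 : Tendsto δ atTop (nhds 0) := by
    have h := hδ.mul (tendsto_inv_atTop_nhds_zero_nat (𝕜 := ℝ))
    rw [mul_zero] at h
    refine h.congr' ?_
    filter_upwards [eventually_gt_atTop 0] with s hs
    have : (s : ℝ) ≠ 0 := by positivity
    field_simp
  have hφδ : Tendsto (fun s => φ + δ s) atTop (nhds φ) := by simpa using hδ0.const_add φ
  have hev : ∀ᶠ x in nhds φ, (A * Real.cos x - B) ^ 2 < 1 :=
    (Continuous.tendsto (by fun_prop) φ).eventually_lt_const hφ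
  have hiter : ∀ x, (A * Real.cos x - B) ^ 2 < 1 → ∀ s : ℕ,
      u s x = Real.cos (s * θ x) * α + Real.sin (s * θ x) * n₀ x ∧
      w s x = Real.cos (s * θ x) * β + Real.sin (s * θ x) * n₁ x := fun x hx s =>
    su2_iterate (p := p x) (q := q x) (u := fun s => u s x) (w := fun s => w s x)
      (by rw [hpre, hcos x hx]) (hpq x) (hsin0 x hx) (hu0 x) (hw0 x) (fun s => hu s x)
      (fun s => hw s x) s
  filter_upwards [hφδ.eventually hev] with s hs
  rw [(hiter φ hφ s).1, (hiter φ hφ s).2, (hiter _ hs s).1, (hiter _ hs s).2]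

lemma orthogonal_entries {a b c d : ℝ}
    (h : Matrix.transpose (!![a, b; c, d] : Matrix (Fin 2) (Fin 2) ℝ) * !![a, b; c, d] = 1) :
    (a * d - b * c) ^ 2 = 1 ∧ c = -((a * d - b * c) * b) ∧ d = (a * d - b * c) * a ∧
      a ^ 2 + b ^ 2 = 1 := by
  have h' := mul_eq_one_comm.1 h
  have h00 := congrFun (congrFun h 0) 0
  have h01 := congrFun (congrFun h 0) 1
  have h11 := congrFun (congrFun h 1) 1
  have g00 := congrFun (congrFun h' 0) 0
  simp [Matrix.mul_apply, Fin.sum_univ_two] at h00 h01 h11 g00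
  refine ⟨?_, ?_, ?_, ?_⟩
  · linear_combination (b * b + d * d) * h00 - (a * b + c * d) * h01 + h11
  · linear_combination -c * h11 + d * h01
  · linear_combination -d * h00 + c * h01
  · linear_combination g00

/-- The two-period coin built from the rows `(a₀, b₀)` and `(a₁, b₁)` of two orthogonal matrices
of common determinant `ε`. -/
def twoPeriodCoin (ε a₀ b₀ a₁ b₁ : ℝ) (t : ℕ) : Matrix (Fin 2) (Fin 2) ℂ :=
  if Even t then !![(a₀ : ℂ), (b₀ : ℂ); ((-(ε * b₀) : ℝ) : ℂ), ((ε * a₀ : ℝ) : ℂ)]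
  else !![(a₁ : ℂ), (b₁ : ℂ); ((-(ε * b₁) : ℝ) : ℂ), ((ε * a₁ : ℝ) : ℂ)]

lemma exists_twoPeriodCoin_eq {ε a₀ b₀ a₁ b₁ : ℝ} (h₀ : a₀ ^ 2 + b₀ ^ 2 = 1)
    (h₁ : a₁ ^ 2 + b₁ ^ 2 = 1) (t : ℕ) : ∃ a b : ℝ, a ^ 2 + b ^ 2 = 1 ∧
      twoPeriodCoin ε a₀ b₀ a₁ b₁ t =
        !![(a : ℂ), (b : ℂ); ((-(ε * b) : ℝ) : ℂ), ((ε * a : ℝ) : ℂ)] := by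
  by_cases ht : Even t
  · exact ⟨a₀, b₀, h₀, by simp [twoPeriodCoin, ht]⟩
  · exact ⟨a₁, b₁, h₁, by simp [twoPeriodCoin, ht]⟩

lemma qwPairing_succ_sub {U : ℕ → Matrix (Fin 2) (Fin 2) ℂ} {ψ : ℕ → ℤ → Fin 2 → ℂ} {α β : ℂ}
    (hinit : QWInit α β ψ) (hevol : QWEvolves U ψ) {t : ℕ} {ε a b : ℝ} (hε : ε ^ 2 = 1)
    (hab : a ^ 2 + b ^ 2 = 1)
    (hU : U t = !![(a : ℂ), (b : ℂ); ((-(ε * b) : ℝ) : ℂ), ((ε * a : ℝ) : ℂ)]) (k l : ℝ) :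
    qwPairing ψ (t + 1) k l - qwPairing ψ t k l =
      (Complex.exp ((l - k : ℝ) * Complex.I) - 1) *
          (starRingEnd ℂ (a * qwFourier ψ t 0 k + b * qwFourier ψ t 1 k) *
            (a * qwFourier ψ t 0 l + b * qwFourier ψ t 1 l)) +
        (Complex.exp ((k - l : ℝ) * Complex.I) - 1) *
          (starRingEnd ℂ (-b * qwFourier ψ t 0 k + a * qwFourier ψ t 1 k) *
            (-b * qwFourier ψ t 0 l + a * qwFourier ψ t 1 l)) := by
  have hεC : (ε : ℂ) ^ 2 = 1 := by exact_mod_cast hε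
  have habC : (a : ℂ) ^ 2 + (b : ℂ) ^ 2 = 1 := by exact_mod_cast hab
  have e1 : Complex.exp ((l - k : ℝ) * Complex.I) =
      starRingEnd ℂ (Complex.exp (k * Complex.I)) * Complex.exp (l * Complex.I) := by
    rw [← Complex.exp_conj, ← Complex.exp_add]
    congr 1
    simp only [map_mul, Complex.conj_ofReal, Complex.conj_I]
    push_cast
    ring
  have e2 : Complex.exp ((k - l : ℝ) * Complex.I) =
      starRingEnd ℂ (Complex.exp (-(k * Complex.I))) * Complex.exp (-(l * Complex.I)) := by
    rw [← Complex.exp_conj, ← Complex.exp_add]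
    congr 1
    simp only [map_neg, map_mul, Complex.conj_ofReal, Complex.conj_I]
    push_cast
    ring
  rw [e1, e2, qwPairing, qwPairing, (qwFourier_succ hinit hevol t k).1,
    (qwFourier_succ hinit hevol t k).2, (qwFourier_succ hinit hevol t l).1,
    (qwFourier_succ hinit hevol t l).2, hU]
  simp only [Matrix.of_apply, Matrix.cons_val', Matrix.cons_val_zero, Matrix.cons_val_one,
    Matrix.cons_val_fin_one, map_mul, map_add, map_neg, Complex.conj_ofReal, Complex.ofReal_neg,
    Complex.ofReal_mul]
  generalize starRingEnd ℂ (Complex.exp (k * Complex.I)) = x₁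
  generalize starRingEnd ℂ (Complex.exp (-(k * Complex.I))) = x₂
  generalize Complex.exp (l * Complex.I) = y₁
  generalize Complex.exp (-(l * Complex.I)) = y₂
  generalize qwFourier ψ t 0 l = F₀
  generalize qwFourier ψ t 1 l = F₁
  generalize starRingEnd ℂ (qwFourier ψ t 0 k) = G₀
  generalize starRingEnd ℂ (qwFourier ψ t 1 k) = G₁
  linear_combination x₂ * y₂ * (-b * G₀ + a * G₁) * (-b * F₀ + a * F₁) * hεC +
    (G₀ * F₀ + G₁ * F₁) * habC

lemma qwPairing_self {ε a₀ b₀ a₁ b₁ : ℝ} {ψ : ℕ → ℤ → Fin 2 → ℂ} {α β : ℂ}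
    (hε : ε ^ 2 = 1) (h₀ : a₀ ^ 2 + b₀ ^ 2 = 1) (h₁ : a₁ ^ 2 + b₁ ^ 2 = 1)
    (hαβ : Complex.normSq α + Complex.normSq β = 1)
    (hinit : QWInit α β ψ) (hevol : QWEvolves (twoPeriodCoin ε a₀ b₀ a₁ b₁) ψ) (t : ℕ) (k : ℝ) :
    qwPairing ψ t k k = 1 := by
  induction t with
  | zero =>
    rw [qwPairing, (qwFourier_zero hinit k).1, (qwFourier_zero hinit k).2,
      ← Complex.normSq_eq_conj_mul_self, ← Complex.normSq_eq_conj_mul_self]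
    exact_mod_cast hαβ
  | succ t ih =>
    obtain ⟨a, b, hab, hU⟩ := exists_twoPeriodCoin_eq (ε := ε) h₀ h₁ t
    have h := qwPairing_succ_sub hinit hevol hε hab hU k k
    simp only [sub_self, Complex.ofReal_zero, zero_mul, Complex.exp_zero, add_zero] at h
    rw [sub_eq_zero.1 h, ih]

lemma norm_qwFourier_le_one {ψ : ℕ → ℤ → Fin 2 → ℂ} {t : ℕ} {k : ℝ}
    (h : qwPairing ψ t k k = 1) (j : Fin 2) : ‖qwFourier ψ t j k‖ ≤ 1 := by
  rw [qwPairing, ← Complex.normSq_eq_conj_mul_self, ← Complex.normSq_eq_conj_mul_self] at h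
  have h' : Complex.normSq (qwFourier ψ t 0 k) + Complex.normSq (qwFourier ψ t 1 k) = 1 := by
    exact_mod_cast h
  rw [Complex.normSq_eq_norm_sq, Complex.normSq_eq_norm_sq] at h'
  have h0 := norm_nonneg (qwFourier ψ t 0 k)
  have h1 := norm_nonneg (qwFourier ψ t 1 k)
  fin_cases j
  · change ‖qwFourier ψ t 0 k‖ ≤ 1
    nlinarith
  · change ‖qwFourier ψ t 1 k‖ ≤ 1
    nlinarith

lemma norm_qwPairing_le_two {ψ : ℕ → ℤ → Fin 2 → ℂ} {t : ℕ}
    (h : ∀ k, qwPairing ψ t k k = 1) (k l : ℝ) : ‖qwPairing ψ t k l‖ ≤ 2 := by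
  have hF := fun j k => norm_qwFourier_le_one (h k) j
  refine (norm_add_le _ _).trans ?_
  rw [norm_mul, norm_mul, RCLike.norm_conj, RCLike.norm_conj]
  have h0 := mul_le_one₀ (hF 0 k) (norm_nonneg _) (hF 0 l)
  have h1 := mul_le_one₀ (hF 1 k) (norm_nonneg _) (hF 1 l)
  linarith

lemma norm_qwPairing_succ_sub_le {ε a₀ b₀ a₁ b₁ : ℝ} {ψ : ℕ → ℤ → Fin 2 → ℂ} {α β : ℂ}
    (hε : ε ^ 2 = 1) (h₀ : a₀ ^ 2 + b₀ ^ 2 = 1) (h₁ : a₁ ^ 2 + b₁ ^ 2 = 1)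
    (hαβ : Complex.normSq α + Complex.normSq β = 1)
    (hinit : QWInit α β ψ) (hevol : QWEvolves (twoPeriodCoin ε a₀ b₀ a₁ b₁) ψ) (t : ℕ) (k l : ℝ) :
    ‖qwPairing ψ (t + 1) k l - qwPairing ψ t k l‖ ≤
      4 * ‖Complex.exp ((l - k : ℝ) * Complex.I) - 1‖ +
        4 * ‖Complex.exp ((k - l : ℝ) * Complex.I) - 1‖ := by
  obtain ⟨a, b, hab, hU⟩ := exists_twoPeriodCoin_eq (ε := ε) h₀ h₁ t
  have hF := fun j k => norm_qwFourier_le_one (qwPairing_self hε h₀ h₁ hαβ hinit hevol t k) j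
  have ha : |a| ≤ 1 := abs_le_one_iff_mul_self_le_one.2 (by nlinarith)
  have hb : |b| ≤ 1 := abs_le_one_iff_mul_self_le_one.2 (by nlinarith)
  have hlin : ∀ x y : ℝ, |x| ≤ 1 → |y| ≤ 1 → ∀ k,
      ‖x * qwFourier ψ t 0 k + y * qwFourier ψ t 1 k‖ ≤ 2 := by
    intro x y hx hy k
    refine (norm_add_le _ _).trans ?_
    rw [norm_mul, norm_mul, Complex.norm_real, Complex.norm_real]
    have h0 := mul_le_one₀ hx (norm_nonneg _) (hF 0 k)
    have h1 := mul_le_one₀ hy (norm_nonneg _) (hF 1 k)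
    simp only [Real.norm_eq_abs]
    linarith
  have hquad : ∀ x y : ℝ, |x| ≤ 1 → |y| ≤ 1 →
      ‖starRingEnd ℂ (x * qwFourier ψ t 0 k + y * qwFourier ψ t 1 k) *
        (x * qwFourier ψ t 0 l + y * qwFourier ψ t 1 l)‖ ≤ 4 := by
    intro x y hx hy
    rw [norm_mul, RCLike.norm_conj]
    have := mul_le_mul (hlin x y hx hy k) (hlin x y hx hy l) (norm_nonneg _) zero_le_two
    linarith
  rw [qwPairing_succ_sub hinit hevol hε hab hU]
  refine (norm_add_le _ _).trans (add_le_add ?_ ?_)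
  · rw [norm_mul, mul_comm]
    gcongr
    exact hquad a b ha hb
  · rw [norm_mul, mul_comm]
    gcongr
    simpa using hquad (-b) a (by rwa [abs_neg]) ha

lemma qwFourier_two_mul_succ {ε a₀ b₀ a₁ b₁ : ℝ} {ψ : ℕ → ℤ → Fin 2 → ℂ} {α β : ℂ}
    (hε : ε ^ 2 = 1) (hinit : QWInit α β ψ)
    (hevol : QWEvolves (twoPeriodCoin ε a₀ b₀ a₁ b₁) ψ) (s : ℕ) (x : ℝ) :
    qwFourier ψ (2 * (s + 1)) 0 (x / 2) =
        (Complex.exp (x * Complex.I) * (a₀ * a₁ : ℝ) - (ε * b₀ * b₁ : ℝ)) *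
            qwFourier ψ (2 * s) 0 (x / 2) +
          (Complex.exp (x * Complex.I) * (a₁ * b₀ : ℝ) + (ε * a₀ * b₁ : ℝ)) *
            qwFourier ψ (2 * s) 1 (x / 2) ∧
      qwFourier ψ (2 * (s + 1)) 1 (x / 2) =
        -starRingEnd ℂ (Complex.exp (x * Complex.I) * (a₁ * b₀ : ℝ) + (ε * a₀ * b₁ : ℝ)) *
            qwFourier ψ (2 * s) 0 (x / 2) +
          starRingEnd ℂ (Complex.exp (x * Complex.I) * (a₀ * a₁ : ℝ) - (ε * b₀ * b₁ : ℝ)) *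
            qwFourier ψ (2 * s) 1 (x / 2) := by
  have hεC : (ε : ℂ) ^ 2 = 1 := by exact_mod_cast hε
  have hexp : Complex.exp (x * Complex.I) =
      Complex.exp ((x / 2 : ℝ) * Complex.I) * Complex.exp ((x / 2 : ℝ) * Complex.I) := by
    rw [← Complex.exp_add]; congr 1; push_cast; ring
  have hconj : starRingEnd ℂ (Complex.exp ((x / 2 : ℝ) * Complex.I)) =
      Complex.exp (-((x / 2 : ℝ) * Complex.I)) := by
    rw [← Complex.exp_conj, map_mul, Complex.conj_ofReal, Complex.conj_I, mul_neg]
  have hinv : Complex.exp ((x / 2 : ℝ) * Complex.I) *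
      Complex.exp (-((x / 2 : ℝ) * Complex.I)) = 1 := by
    rw [← Complex.exp_add, add_neg_cancel, Complex.exp_zero]
  have heven : twoPeriodCoin ε a₀ b₀ a₁ b₁ (2 * s) =
      !![(a₀ : ℂ), (b₀ : ℂ); ((-(ε * b₀) : ℝ) : ℂ), ((ε * a₀ : ℝ) : ℂ)] := by
    simp [twoPeriodCoin]
  have hodd : twoPeriodCoin ε a₀ b₀ a₁ b₁ (2 * s + 1) =
      !![(a₁ : ℂ), (b₁ : ℂ); ((-(ε * b₁) : ℝ) : ℂ), ((ε * a₁ : ℝ) : ℂ)] := by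
    simp [twoPeriodCoin]
  have hstep := qwFourier_succ hinit hevol (2 * s) (x / 2)
  have hstep' := qwFourier_succ hinit hevol (2 * s + 1) (x / 2)
  rw [hstep.1, hstep.2, heven, hodd] at hstep'
  rw [show 2 * (s + 1) = 2 * s + 1 + 1 by ring, hstep'.1, hstep'.2, hexp]
  simp only [Matrix.of_apply, Matrix.cons_val', Matrix.cons_val_zero, Matrix.cons_val_one,
    Matrix.cons_val_fin_one, map_mul, map_add, map_sub, Complex.conj_ofReal, Complex.ofReal_neg,
    Complex.ofReal_mul, hconj]
  generalize Complex.exp ((x / 2 : ℝ) * Complex.I) = e at *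
  generalize Complex.exp (-((x / 2 : ℝ) * Complex.I)) = e' at *
  generalize qwFourier ψ (2 * s) 0 (x / 2) = F₀
  generalize qwFourier ψ (2 * s) 1 (x / 2) = F₁
  constructor
  · linear_combination b₁ * (-(ε * b₀) * F₀ + ε * a₀ * F₁) * hinv
  · linear_combination (-(ε * b₁) * (a₀ * F₀ + b₀ * F₁)) * hinv +
      (e' ^ 2 * a₁ * (-b₀ * F₀ + a₀ * F₁)) * hεC

lemma tendsto_qwPairing {ε a₀ b₀ a₁ b₁ k : ℝ} {ψ : ℕ → ℤ → Fin 2 → ℂ} {α β : ℂ}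
    (hε : ε ^ 2 = 1) (h₀ : a₀ ^ 2 + b₀ ^ 2 = 1) (h₁ : a₁ ^ 2 + b₁ ^ 2 = 1)
    (hαβ : Complex.normSq α + Complex.normSq β = 1)
    (hsym : a₀ * (Complex.normSq α - Complex.normSq β) +
      2 * b₀ * (starRingEnd ℂ α * β).re = 0)
    (hinit : QWInit α β ψ) (hevol : QWEvolves (twoPeriodCoin ε a₀ b₀ a₁ b₁) ψ)
    (hk : (a₀ * a₁ * Real.cos (2 * k) - ε * b₀ * b₁) ^ 2 < 1) (ξ : ℝ) :
    Tendsto (fun t : ℕ => qwPairing ψ t k (k - ξ / t)) atTop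
      (nhds (Real.cos (ξ * groupVelocity (a₀ * a₁) (ε * b₀ * b₁) (2 * k)) -
        initialDrift (a₀ * a₁) (ε * b₀ * b₁) (a₁ * b₀) (ε * a₀ * b₁) α β (2 * k) * Complex.I *
          Real.sin (ξ * groupVelocity (a₀ * a₁) (ε * b₀ * b₁) (2 * k)))) := by
  have heven : ∀ δ : ℕ → ℝ, Tendsto (fun s : ℕ => s * δ s) atTop (nhds (-ξ)) →
      Tendsto (fun s => qwPairing ψ (2 * s) k (k + δ s / 2)) atTop
      (nhds (Real.cos (ξ * groupVelocity (a₀ * a₁) (ε * b₀ * b₁) (2 * k)) -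
        initialDrift (a₀ * a₁) (ε * b₀ * b₁) (a₁ * b₀) (ε * a₀ * b₁) α β (2 * k) * Complex.I *
          Real.sin (ξ * groupVelocity (a₀ * a₁) (ε * b₀ * b₁) (2 * k)))) := by
    intro δ hδ
    have h := tendsto_su2_overlap (A := a₀ * a₁) (B := ε * b₀ * b₁) (E := a₁ * b₀)
      (F := ε * a₀ * b₁) (φ := 2 * k) (u := fun s x => qwFourier ψ (2 * s) 0 (x / 2))
      (w := fun s x => qwFourier ψ (2 * s) 1 (x / 2))
      (by linear_combination (b₀ ^ 2 + a₀ ^ 2) * b₁ ^ 2 * hε + (a₁ ^ 2 + b₁ ^ 2) * h₀ + h₁)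
      (by ring) hαβ (by linear_combination a₁ * hsym) hk
      (fun x => (qwFourier_zero hinit _).1) (fun x => (qwFourier_zero hinit _).2)
      (fun s x => (qwFourier_two_mul_succ hε hinit hevol s x).1)
      (fun s x => (qwFourier_two_mul_succ hε hinit hevol s x).2) hδ
    refine h.congr fun s => ?_
    rw [qwPairing, show 2 * k / 2 = k by ring, show (2 * k + δ s) / 2 = k + δ s / 2 by ring]
  refine tendsto_of_tendsto_even_odd ?_ ?_
  · have hδ : Tendsto (fun s : ℕ => (s : ℝ) * (-ξ / s)) atTop (nhds (-ξ)) := by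
      refine tendsto_const_nhds.congr' ?_
      filter_upwards [eventually_gt_atTop 0] with s hs
      have : (s : ℝ) ≠ 0 := by positivity
      field_simp
    refine (heven _ hδ).congr fun s => ?_
    congr 1
    push_cast
    rw [mul_comm (2 : ℝ), ← div_div]
    ring
  · have hinv : Tendsto (fun s : ℕ => ((2 * s + 1 : ℕ) : ℝ)⁻¹) atTop (nhds 0) :=
      (tendsto_inv_atTop_nhds_zero_nat (𝕜 := ℝ)).comp
        (tendsto_atTop_mono (fun s => by simp only [id]; omega) tendsto_id)
    have hδ : Tendsto (fun s : ℕ => (s : ℝ) * (-(2 * ξ) / (2 * s + 1 : ℕ))) atTop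
        (nhds (-ξ)) := by
      have h := (hinv.const_mul ξ).const_add (-ξ)
      rw [mul_zero, add_zero] at h
      refine h.congr fun s => ?_
      have : ((2 * s + 1 : ℕ) : ℝ) ≠ 0 := by positivity
      field_simp
      push_cast
      ring
    have hlim := heven _ hδ
    have hl : ∀ s : ℕ, k + -(2 * ξ) / (2 * s + 1 : ℕ) / 2 = k - ξ / (2 * s + 1 : ℕ) :=
      fun s => by ring
    simp only [hl] at hlim
    have hx : Tendsto (fun s : ℕ => ξ / (2 * s + 1 : ℕ)) atTop (nhds 0) := by
      simpa [div_eq_mul_inv] using hinv.const_mul ξ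
    have hbound : Tendsto (fun s : ℕ =>
        4 * ‖Complex.exp ((k - ξ / (2 * s + 1 : ℕ) - k : ℝ) * Complex.I) - 1‖ +
          4 * ‖Complex.exp ((k - (k - ξ / (2 * s + 1 : ℕ)) : ℝ) * Complex.I) - 1‖) atTop
        (nhds 0) := by
      have hc : Continuous fun y : ℝ => 4 * ‖Complex.exp ((k - y - k : ℝ) * Complex.I) - 1‖ +
          4 * ‖Complex.exp ((k - (k - y) : ℝ) * Complex.I) - 1‖ := by fun_prop
      have h := (hc.tendsto 0).comp hx
      simpa [Function.comp_def] using h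
    have hdiff := squeeze_zero_norm (fun s : ℕ => norm_qwPairing_succ_sub_le hε h₀ h₁ hαβ hinit
      hevol (2 * s) k (k - ξ / (2 * s + 1 : ℕ))) hbound
    simpa using hdiff.add hlim

lemma integral_comp_two_mul_of_even {f : ℝ → ℝ} (hper : Function.Periodic f (2 * Real.pi))
    (heven : ∀ x, f (-x) = f x) (hf : ∀ a b, IntervalIntegrable f volume a b) :
    ∫ k in -Real.pi..Real.pi, f (2 * k) = 2 * ∫ x in (0 : ℝ)..Real.pi, f x := by
  have hneg : ∀ a, ∫ x in -a..0, f x = ∫ x in (0 : ℝ)..a, f x := fun a => by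
    have h := intervalIntegral.integral_comp_neg (a := 0) (b := a) f
    simpa [heven] using h.symm
  have hshift := hper.intervalIntegral_add_eq 0 (-Real.pi)
  rw [zero_add, show -Real.pi + 2 * Real.pi = Real.pi by ring] at hshift
  rw [intervalIntegral.integral_comp_mul_left f two_ne_zero, mul_neg,
    ← intervalIntegral.integral_add_adjacent_intervals (hf _ 0) (hf 0 _), hneg, hshift,
    ← intervalIntegral.integral_add_adjacent_intervals (hf _ 0) (hf 0 _), hneg, smul_eq_mul]
  ring

lemma tendsto_charFun_qwMeasure {ε a₀ b₀ a₁ b₁ : ℝ} {ψ : ℕ → ℤ → Fin 2 → ℂ} {α β : ℂ}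
    (hε : ε ^ 2 = 1) (ha₀ : a₀ ≠ 0) (ha₁ : a₁ ≠ 0) (h₀ : a₀ ^ 2 + b₀ ^ 2 = 1)
    (h₁ : a₁ ^ 2 + b₁ ^ 2 = 1) (hαβ : Complex.normSq α + Complex.normSq β = 1)
    (hsym : a₀ * (Complex.normSq α - Complex.normSq β) +
      2 * b₀ * (starRingEnd ℂ α * β).re = 0)
    (hinit : QWInit α β ψ) (hevol : QWEvolves (twoPeriodCoin ε a₀ b₀ a₁ b₁) ψ) (ξ : ℝ) :
    Tendsto (fun t => charFun (qwMeasure ψ t) ξ) atTop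
      (nhds ((1 / Real.pi * ∫ φ in (0 : ℝ)..Real.pi,
        Real.cos (ξ * groupVelocity (a₀ * a₁) (ε * b₀ * b₁) φ) : ℝ) : ℂ)) := by
  set A := a₀ * a₁ with hA
  set B := ε * b₀ * b₁ with hB
  have hAB : |A| + |B| ≤ 1 := abs_add_abs_le_one_of_sq (m := a₀) (M := a₁) (by nlinarith)
    (by nlinarith) (by rw [hA]; ring) (by
      rw [hB, show 1 - a₀ ^ 2 = b₀ ^ 2 by linarith, show 1 - a₁ ^ 2 = b₁ ^ 2 by linarith]
      linear_combination (b₀ ^ 2 * b₁ ^ 2) * hε)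
  have hself := qwPairing_self hε h₀ h₁ hαβ hinit hevol
  have hcont : ∀ t : ℕ, Continuous fun k => qwPairing ψ t k (k - ξ / t) := fun t => by
    have hF := continuous_qwFourier hinit hevol t
    have hF0 := hF 0
    have hF1 := hF 1
    unfold qwPairing
    fun_prop
  have hlim : ∀ k, Real.sin (2 * k) ≠ 0 →
      Tendsto (fun t : ℕ => qwPairing ψ t k (k - ξ / t) + qwPairing ψ t (-k) (-k - ξ / t)) atTop
        (nhds ((2 * Real.cos (ξ * groupVelocity A B (2 * k)) : ℝ) : ℂ)) := by
    intro k hk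
    have hsq := sq_dispersion_lt_one (mul_ne_zero ha₀ ha₁) hAB hk
    have h := (tendsto_qwPairing hε h₀ h₁ hαβ hsym hinit hevol hsq ξ).add
      (tendsto_qwPairing (k := -k) hε h₀ h₁ hαβ hsym hinit hevol
        (by rwa [mul_neg, Real.cos_neg]) ξ)
    refine h.trans (le_of_eq ?_)
    rw [mul_neg, groupVelocity_neg, initialDrift_neg, mul_neg, Real.cos_neg, Real.sin_neg]
    push_cast
    congr 1
    ring
  have hae : ∀ᵐ k : ℝ, Real.sin (2 * k) ≠ 0 := by
    have hcount : {k : ℝ | Real.sin (2 * k) = 0}.Countable := by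
      refine (Set.countable_range fun n : ℤ => (n * Real.pi) / 2).mono fun k hk => ?_
      obtain ⟨n, hn⟩ := Real.sin_eq_zero_iff.1 hk
      exact ⟨n, by simp only; linarith⟩
    exact hcount.ae_notMem volume
  have hdom := intervalIntegral.tendsto_integral_filter_of_dominated_convergence
    (μ := volume) (a := -Real.pi) (b := Real.pi) (l := atTop)
    (F := fun (t : ℕ) k => qwPairing ψ t k (k - ξ / t) + qwPairing ψ t (-k) (-k - ξ / t))
    (f := fun k => ((2 * Real.cos (ξ * groupVelocity A B (2 * k)) : ℝ) : ℂ)) (fun _ => 4)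
    (Eventually.of_forall fun t => ((hcont t).add
      ((hcont t).comp continuous_neg)).aestronglyMeasurable)
    (Eventually.of_forall fun t => Eventually.of_forall fun k _ =>
      (norm_add_le _ _).trans (by
        have h1 := norm_qwPairing_le_two (hself t) k (k - ξ / t)
        have h2 := norm_qwPairing_le_two (hself t) (-k) (-k - ξ / t)
        linarith))
    intervalIntegrable_const (hae.mono fun k hk _ => hlim k hk)
  have hsymm : ∀ t : ℕ, ∫ k in -Real.pi..Real.pi,
      (qwPairing ψ t k (k - ξ / t) + qwPairing ψ t (-k) (-k - ξ / t)) =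
        2 * ∫ k in -Real.pi..Real.pi, qwPairing ψ t k (k - ξ / t) := fun t => by
    have hneg := intervalIntegral.integral_comp_neg (a := -Real.pi) (b := Real.pi)
      fun k => qwPairing ψ t k (k - ξ / t)
    rw [neg_neg] at hneg
    have hadd := intervalIntegral.integral_add ((hcont t).intervalIntegrable (-Real.pi) Real.pi)
      (((hcont t).comp continuous_neg).intervalIntegrable (μ := volume) (-Real.pi) Real.pi)
    simp only [Function.comp_apply] at hadd
    rw [hadd, hneg, two_mul]
  have hmeas : Measurable fun φ => Real.cos (ξ * groupVelocity A B φ) := by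
    have := measurable_groupVelocity A B
    fun_prop
  have hfint := integral_comp_two_mul_of_even
    (f := fun φ => Real.cos (ξ * groupVelocity A B φ))
    (fun φ => by simp [groupVelocity]) (fun φ => by simp [groupVelocity_neg])
    (fun a b => (intervalIntegrable_const (c := (1 : ℝ))).mono_fun
      hmeas.aestronglyMeasurable (Eventually.of_forall fun φ => by
        simpa using Real.abs_cos_le_one _))
  have hres := hdom.const_mul ((2 : ℂ)⁻¹ * (2 * Real.pi : ℂ)⁻¹)
  refine (hres.congr fun t => ?_).trans (le_of_eq ?_)
  · rw [charFun_qwMeasure hinit hevol, hsymm]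
    ring
  · rw [intervalIntegral.integral_ofReal, intervalIntegral.integral_const_mul, hfint]
    have hpi : (Real.pi : ℂ) ≠ 0 := by exact_mod_cast Real.pi_ne_zero
    push_cast
    congr 1
    field_simp

/-- Two-period QW with orthogonal coins, `det(H₁H₀) > 0`, symmetric initial state:
`X_t/t ⇒ Z` with density exactly `f_K(x; a_ξ)`, where `|a_ξ| = min{|a₀|, |a₁|}`. -/
theorem two_period_QW_weak_limit_symmetric
    (a₀ b₀ c₀ d₀ a₁ b₁ c₁ d₁ : ℝ)
    (hne : a₀ ≠ 0 ∧ b₀ ≠ 0 ∧ c₀ ≠ 0 ∧ d₀ ≠ 0 ∧ a₁ ≠ 0 ∧ b₁ ≠ 0 ∧ c₁ ≠ 0 ∧ d₁ ≠ 0)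
    (horth₀ : Matrix.transpose (!![a₀, b₀; c₀, d₀] : Matrix (Fin 2) (Fin 2) ℝ) * !![a₀, b₀; c₀, d₀] = 1)
    (horth₁ : Matrix.transpose (!![a₁, b₁; c₁, d₁] : Matrix (Fin 2) (Fin 2) ℝ) * !![a₁, b₁; c₁, d₁] = 1)
    (hdet : 0 < ((!![a₁, b₁; c₁, d₁] : Matrix (Fin 2) (Fin 2) ℝ) * !![a₀, b₀; c₀, d₀]).det)
    (α β : ℂ) (hαβ : Complex.normSq α + Complex.normSq β = 1)
    (ψ : ℕ → ℤ → Fin 2 → ℂ)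
    (hinit : QWInit α β ψ)
    (hsym : Complex.normSq α - Complex.normSq β +
      ((α * (starRingEnd ℂ) β + (starRingEnd ℂ) α * β) * (b₀ : ℂ) / (a₀ : ℂ)).re = 0)
    (hevol : QWEvolves
      (fun t => if Even t then !![(a₀ : ℂ), (b₀ : ℂ); (c₀ : ℂ), (d₀ : ℂ)]
                else !![(a₁ : ℂ), (b₁ : ℂ); (c₁ : ℂ), (d₁ : ℂ)]) ψ) :
    qwWeakLimit ψ (fun x => konnoDensity (min |a₀| |a₁|) x) := by
  obtain ⟨ha₀, hb₀, -, -, ha₁, hb₁, -, -⟩ := hne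
  obtain ⟨hε, hc₀, hd₀, h₀⟩ := orthogonal_entries horth₀
  obtain ⟨hε', hc₁, hd₁, h₁⟩ := orthogonal_entries horth₁
  rw [Matrix.det_mul, Matrix.det_fin_two_of, Matrix.det_fin_two_of] at hdet
  set ε := a₀ * d₀ - b₀ * c₀
  have hεε : a₁ * d₁ - b₁ * c₁ = ε := by
    rcases sq_eq_sq_iff_eq_or_eq_neg.1 (hε'.trans hε.symm) with h | h
    · exact h
    · rw [h] at hdet
      nlinarith
  rw [hεε] at hc₁ hd₁
  have hU : (fun t => if Even t then !![(a₀ : ℂ), (b₀ : ℂ); (c₀ : ℂ), (d₀ : ℂ)]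
      else !![(a₁ : ℂ), (b₁ : ℂ); (c₁ : ℂ), (d₁ : ℂ)]) = twoPeriodCoin ε a₀ b₀ a₁ b₁ := by
    funext t
    rw [twoPeriodCoin, ← hc₀, ← hd₀, ← hc₁, ← hd₁]
  rw [hU] at hevol
  have hsym' : a₀ * (Complex.normSq α - Complex.normSq β) +
      2 * b₀ * (starRingEnd ℂ α * β).re = 0 := by
    have hre : ((α * starRingEnd ℂ β + starRingEnd ℂ α * β) * (b₀ : ℂ) / (a₀ : ℂ)).re =
        2 * (starRingEnd ℂ α * β).re * b₀ / a₀ := by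
      rw [Complex.div_ofReal_re, Complex.re_mul_ofReal]
      simp only [Complex.add_re, Complex.mul_re, Complex.conj_re, Complex.conj_im]
      ring
    rw [hre] at hsym
    field_simp at hsym
    linear_combination hsym
  have hlt : ∀ {a b : ℝ}, b ≠ 0 → a ^ 2 + b ^ 2 = 1 → |a| < 1 := fun {a b} hb h =>
    (sq_lt_one_iff_abs_lt_one a).1 (by have := sq_pos_of_ne_zero hb; linarith)
  have hm : 0 < min |a₀| |a₁| := lt_min (abs_pos.2 ha₀) (abs_pos.2 ha₁)
  have hM : max |a₀| |a₁| < 1 := max_lt (hlt hb₀ h₀) (hlt hb₁ h₁)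
  have hm1 : min |a₀| |a₁| < 1 := min_le_max.trans_lt hM
  have hA : |a₀ * a₁| = min |a₀| |a₁| * max |a₀| |a₁| := by rw [min_mul_max, abs_mul]
  have hB : (ε * b₀ * b₁) ^ 2 = (1 - (min |a₀| |a₁|) ^ 2) * (1 - (max |a₀| |a₁|) ^ 2) := by
    have hprod : (ε * b₀ * b₁) ^ 2 = (1 - |a₀| ^ 2) * (1 - |a₁| ^ 2) := by
      rw [sq_abs, sq_abs, show 1 - a₀ ^ 2 = b₀ ^ 2 by linarith,
        show 1 - a₁ ^ 2 = b₁ ^ 2 by linarith]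
      linear_combination (b₀ ^ 2 * b₁ ^ 2) * hε
    rcases le_total |a₀| |a₁| with h | h
    · rw [min_eq_left h, max_eq_right h, hprod]
    · rw [min_eq_right h, max_eq_left h, hprod, mul_comm]
  have hlim : ∀ ξ, Tendsto (fun t => charFun (qwMeasure ψ t) ξ) atTop
      (nhds (charFun (konnoLaw (min |a₀| |a₁|)) ξ)) := fun ξ => by
    rw [charFun_konnoLaw hm min_le_max hM hA hB]
    exact tendsto_charFun_qwMeasure hε ha₀ ha₁ h₀ h₁ hαβ hsym' hinit hevol ξ
  let μ : ℕ → ProbabilityMeasure ℝ := fun t => ⟨qwMeasure ψ t,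
    isProbabilityMeasure_qwMeasure hinit hevol t (qwPairing_self hε h₀ h₁ hαβ hinit hevol t)⟩
  let μ₀ : ProbabilityMeasure ℝ := ⟨konnoLaw (min |a₀| |a₁|), isProbabilityMeasure_konnoLaw hm hm1⟩
  have hμ : Tendsto μ atTop (nhds μ₀) := ProbabilityMeasure.tendsto_of_tendsto_charFun hlim
  intro g
  have h := ProbabilityMeasure.tendsto_iff_forall_integral_tendsto.1 hμ g
  refine h.trans (le_of_eq ?_)
  congr 1
  change ∫ y, g y ∂konnoLaw (min |a₀| |a₁|) = _
  rw [integral_konnoLaw]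
  simp only [smul_eq_mul, mul_comm]
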